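/- arXiv:1803.01306 — 9 statements merged into one kernel-verified Lean document; each statement's English description precedes it below -/
import Mathlib

section
/- Let Σ ⊆ ℝ² be an open set, ρ : Σ → (0,∞) a smooth function, and X, N : Σ → ℝ³ smooth maps satisfying the Gauss–Weingarten system and the conformal frame relations with respect to the Minkowski inner product. Then at every point p ∈ Σ the following three conditions are equivalent: (i) det(X_u, X_uu, X_uuu)(p) = 0 (the condition that the u-curvature lines are planar); (ii) det(X_v, X_vv, X_vvv)(p) = 0 (the condition that the v-curvature lines are planar); (iii) ρ_uv(p) = 0. Here det denotes the determinant of the 3×3 matrix whose rows are the indicated vectors, and subscripts denote partial derivatives. -/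
open Real Filter

/-- Partial derivative in the first variable. -/
noncomputable def pu {E : Type*} [NormedAddCommGroup E] [NormedSpace ℝ E]
    (f : ℝ → ℝ → E) (u v : ℝ) : E := deriv (fun x => f x v) u

/-- Partial derivative in the second variable. -/
noncomputable def pv {E : Type*} [NormedAddCommGroup E] [NormedSpace ℝ E]
    (f : ℝ → ℝ → E) (u v : ℝ) : E := deriv (fun y => f u y) v

/-- Minkowski inner product on ℝ³ = ℝ^{2,1}, with coordinates (x₁, x₂, x₀). -/
def mink (x y : ℝ × ℝ × ℝ) : ℝ := x.1 * y.1 + x.2.1 * y.2.1 - x.2.2 * y.2.2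

/-- Determinant of the 3×3 matrix with rows a, b, c. -/
def det3 (a b c : ℝ × ℝ × ℝ) : ℝ :=
  a.1 * (b.2.1 * c.2.2 - b.2.2 * c.2.1)
    - a.2.1 * (b.1 * c.2.2 - b.2.2 * c.1)
    + a.2.2 * (b.1 * c.2.1 - b.2.1 * c.1)

/-!
Along a u-line, the part of `X_uu` transverse to `X_u` is `Y = N - (ρ_v / ρ) X_v`, and the
Gauss–Weingarten equations give `Y_u = (ρ⁻² - (ρ_v / ρ)²) X_u - (ρ_uv / ρ) X_v`. Hence
`det(X_u, X_uu, X_uuu) = det(X_u, Y, Y_u) = (ρ_uv / ρ) det(X_u, X_v, N)`, and the last determinant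
does not vanish because the frame is orthogonal with non-isotropic vectors. The system is invariant
under exchanging `u` and `v` and replacing `N` by `-N`, which carries the statement about u-lines to
the one about v-lines.
-/

open Function Topology

lemma differentiableAt_fderiv_of_contDiffAt_two {E F : Type*} [NormedAddCommGroup E]
    [NormedSpace ℝ E] [NormedAddCommGroup F] [NormedSpace ℝ F] {g : F → E} {a : F}
    (hg : ContDiffAt ℝ 2 g a) : DifferentiableAt ℝ (fderiv ℝ g) a :=
  (hg.fderiv_right (m := 1) (by norm_num)).differentiableAt one_ne_zero

section PartialDerivatives

variable {E : Type*} [NormedAddCommGroup E] [NormedSpace ℝ E] {f : ℝ → ℝ → E} {u v : ℝ}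

lemma differentiableAt_left_of_uncurry (hf : DifferentiableAt ℝ (uncurry f) (u, v)) :
    DifferentiableAt ℝ (fun x => f x v) u :=
  DifferentiableAt.comp (g := uncurry f) (f := fun x => (x, v)) u hf (by fun_prop)

lemma pu_eq_fderiv (hf : DifferentiableAt ℝ (uncurry f) (u, v)) :
    pu f u v = fderiv ℝ (uncurry f) (u, v) (1, 0) :=
  (HasFDerivAt.comp_hasDerivAt (f := fun x => (x, v)) u hf.hasFDerivAt
    ((hasDerivAt_id u).prodMk (hasDerivAt_const u v))).deriv

lemma pv_eq_fderiv (hf : DifferentiableAt ℝ (uncurry f) (u, v)) :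
    pv f u v = fderiv ℝ (uncurry f) (u, v) (0, 1) :=
  (HasFDerivAt.comp_hasDerivAt (f := fun y => (u, y)) v hf.hasFDerivAt
    ((hasDerivAt_const v u).prodMk (hasDerivAt_id v))).deriv

lemma uncurry_pu_eventuallyEq_fderiv (hf : ContDiffAt ℝ 1 (uncurry f) (u, v)) :
    uncurry (pu f) =ᶠ[𝓝 (u, v)] fun q => fderiv ℝ (uncurry f) q (1, 0) :=
  (hf.eventually (by simp)).mono fun _ hq => pu_eq_fderiv (hq.differentiableAt one_ne_zero)

lemma uncurry_pv_eventuallyEq_fderiv (hf : ContDiffAt ℝ 1 (uncurry f) (u, v)) :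
    uncurry (pv f) =ᶠ[𝓝 (u, v)] fun q => fderiv ℝ (uncurry f) q (0, 1) :=
  (hf.eventually (by simp)).mono fun _ hq => pv_eq_fderiv (hq.differentiableAt one_ne_zero)

lemma differentiableAt_uncurry_pu (hf : ContDiffAt ℝ 2 (uncurry f) (u, v)) :
    DifferentiableAt ℝ (uncurry (pu f)) (u, v) :=
  ((differentiableAt_fderiv_of_contDiffAt_two hf).clm_apply
    (differentiableAt_const _)).congr_of_eventuallyEq
      (uncurry_pu_eventuallyEq_fderiv (hf.of_le one_le_two))

lemma differentiableAt_uncurry_pv (hf : ContDiffAt ℝ 2 (uncurry f) (u, v)) :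
    DifferentiableAt ℝ (uncurry (pv f)) (u, v) :=
  ((differentiableAt_fderiv_of_contDiffAt_two hf).clm_apply
    (differentiableAt_const _)).congr_of_eventuallyEq
      (uncurry_pv_eventuallyEq_fderiv (hf.of_le one_le_two))

lemma pu_pv_comm (hf : ContDiffAt ℝ 2 (uncurry f) (u, v)) : pu (pv f) u v = pv (pu f) u v := by
  have hf' := differentiableAt_fderiv_of_contDiffAt_two hf
  have hf₁ := hf.of_le one_le_two
  have hsymm : IsSymmSndFDerivAt ℝ (uncurry f) (u, v) := hf.isSymmSndFDerivAt (by simp)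
  rw [pu_eq_fderiv (differentiableAt_uncurry_pv hf), pv_eq_fderiv (differentiableAt_uncurry_pu hf),
    (uncurry_pv_eventuallyEq_fderiv hf₁).fderiv_eq, (uncurry_pu_eventuallyEq_fderiv hf₁).fderiv_eq,
    fderiv_clm_apply hf' (differentiableAt_const _),
    fderiv_clm_apply hf' (differentiableAt_const _)]
  simpa using hsymm.eq (1, 0) (0, 1)

end PartialDerivatives

lemma mink_comm (a b : ℝ × ℝ × ℝ) : mink a b = mink b a := by
  simp only [mink]
  ring

lemma det3_sq_eq_neg_det_gram (a b c : ℝ × ℝ × ℝ) :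
    det3 a b c ^ 2 = -Matrix.det !![mink a a, mink a b, mink a c;
      mink b a, mink b b, mink b c; mink c a, mink c b, mink c c] := by
  simp only [Matrix.det_fin_three, Matrix.of_apply, Matrix.cons_val, mink, det3]
  ring

lemma det3_ne_zero_of_mink_orthogonal {a b c : ℝ × ℝ × ℝ} (ha : mink a a ≠ 0) (hb : mink b b ≠ 0)
    (hc : mink c c ≠ 0) (hab : mink a b = 0) (hac : mink a c = 0) (hbc : mink b c = 0) :
    det3 a b c ≠ 0 := by
  have hsq : det3 a b c ^ 2 = -(mink a a * mink b b * mink c c) := by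
    simp [det3_sq_eq_neg_det_gram, Matrix.det_fin_three, mink_comm b a, mink_comm c a,
      mink_comm c b, hab, hac, hbc]
  rw [← sq_eq_zero_iff.ne, hsq]
  exact neg_ne_zero.mpr (mul_ne_zero (mul_ne_zero ha hb) hc)

lemma det3_swap_neg (a b c : ℝ × ℝ × ℝ) : det3 b a (-c) = det3 a b c := by
  simp only [det3, Prod.fst_neg, Prod.snd_neg]
  ring

lemma det3_add_smul_rows (a b c : ℝ × ℝ × ℝ) (r s t : ℝ) :
    det3 a (r • a + b) (s • a + t • (r • a + b) + c) = det3 a b c := by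
  simp only [det3, Prod.fst_add, Prod.snd_add, Prod.smul_fst, Prod.smul_snd, smul_eq_mul]
  ring

lemma det3_sub_smul_rows (a b c : ℝ × ℝ × ℝ) (r s t : ℝ) :
    det3 a (c - r • b) (s • a - t • b) = t * det3 a b c := by
  simp only [det3, Prod.fst_sub, Prod.snd_sub, Prod.smul_fst, Prod.smul_snd, smul_eq_mul]
  ring

lemma det3_deriv_deriv_eq {T Y : ℝ → ℝ × ℝ × ℝ} {a : ℝ → ℝ} {t : ℝ}
    (hT : DifferentiableAt ℝ T t) (ha : DifferentiableAt ℝ a t) (hY : DifferentiableAt ℝ Y t)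
    (hTY : deriv T =ᶠ[𝓝 t] a • T + Y) :
    det3 (T t) (deriv T t) (deriv (deriv T) t) = det3 (T t) (Y t) (deriv Y t) := by
  have hT'' : deriv (deriv T) t = deriv a t • T t + a t • deriv T t + deriv Y t := by
    rw [hTY.deriv_eq, deriv_add (ha.smul hT) hY, deriv_smul ha hT, add_comm (a t • _)]
  rw [hT'', hTY.self_of_nhds]
  exact det3_add_smul_rows _ _ _ _ _ _

/-- The Gauss–Weingarten system on an open set `S`, for a conformal factor `ρ`, a surface `X` and a
normal `N`, with the regularity needed to differentiate its second-order equations once more.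
The conformal frame relations are not part of the structure. -/
structure GaussWeingartenOn (S : Set (ℝ × ℝ)) (ρ : ℝ → ℝ → ℝ) (X N : ℝ → ℝ → ℝ × ℝ × ℝ) :
    Prop where
  isOpen : IsOpen S
  contDiffOn_factor : ContDiffOn ℝ 2 (uncurry ρ) S
  contDiffOn_surface : ContDiffOn ℝ 2 (uncurry X) S
  differentiableOn_normal : DifferentiableOn ℝ (uncurry N) S
  factor_ne_zero : ∀ ⦃u v⦄, (u, v) ∈ S → ρ u v ≠ 0
  pu_pu : ∀ ⦃u v⦄, (u, v) ∈ S → pu (pu X) u v =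
    (pu ρ u v / ρ u v) • pu X u v - (pv ρ u v / ρ u v) • pv X u v + N u v
  pv_pv : ∀ ⦃u v⦄, (u, v) ∈ S → pv (pv X) u v =
    -((pu ρ u v / ρ u v) • pu X u v) + (pv ρ u v / ρ u v) • pv X u v - N u v
  pv_pu : ∀ ⦃u v⦄, (u, v) ∈ S → pv (pu X) u v =
    (pv ρ u v / ρ u v) • pu X u v + (pu ρ u v / ρ u v) • pv X u v
  pu_normal : ∀ ⦃u v⦄, (u, v) ∈ S → pu N u v = (ρ u v ^ 2)⁻¹ • pu X u v
  pv_normal : ∀ ⦃u v⦄, (u, v) ∈ S → pv N u v = -((ρ u v ^ 2)⁻¹ • pv X u v)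

namespace GaussWeingartenOn

variable {S : Set (ℝ × ℝ)} {ρ : ℝ → ℝ → ℝ} {X N : ℝ → ℝ → ℝ × ℝ × ℝ} {u v : ℝ}

lemma contDiffAt_factor (h : GaussWeingartenOn S ρ X N) (huv : (u, v) ∈ S) :
    ContDiffAt ℝ 2 (uncurry ρ) (u, v) :=
  h.contDiffOn_factor.contDiffAt (h.isOpen.mem_nhds huv)

lemma contDiffAt_surface (h : GaussWeingartenOn S ρ X N) (huv : (u, v) ∈ S) :
    ContDiffAt ℝ 2 (uncurry X) (u, v) :=
  h.contDiffOn_surface.contDiffAt (h.isOpen.mem_nhds huv)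

lemma differentiableAt_normal (h : GaussWeingartenOn S ρ X N) (huv : (u, v) ∈ S) :
    DifferentiableAt ℝ (uncurry N) (u, v) :=
  h.differentiableOn_normal.differentiableAt (h.isOpen.mem_nhds huv)

lemma flip_neg (h : GaussWeingartenOn S ρ X N) :
    GaussWeingartenOn (Prod.swap ⁻¹' S) (flip ρ) (flip X) (-flip N) where
  isOpen := h.isOpen.preimage continuous_swap
  contDiffOn_factor := h.contDiffOn_factor.comp
    (contDiff_snd.prodMk contDiff_fst).contDiffOn (Set.mapsTo_preimage _ _)
  contDiffOn_surface := h.contDiffOn_surface.comp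
    (contDiff_snd.prodMk contDiff_fst).contDiffOn (Set.mapsTo_preimage _ _)
  differentiableOn_normal := (h.differentiableOn_normal.comp
    (differentiable_snd.prodMk differentiable_fst).differentiableOn (Set.mapsTo_preimage _ _)).neg
  factor_ne_zero u v huv := h.factor_ne_zero huv
  pu_pu u v huv := (h.pv_pv huv).trans (by rw [neg_add_eq_sub, sub_eq_add_neg _ (N v u)]; rfl)
  pv_pv u v huv := (h.pu_pu huv).trans (by rw [sub_eq_neg_add, ← sub_neg_eq_add _ (N v u)]; rfl)
  pv_pu u v huv :=
    (pu_pv_comm (h.contDiffAt_surface huv)).trans ((h.pv_pu huv).trans (add_comm _ _))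
  pu_normal u v huv := deriv.neg.trans (neg_eq_iff_eq_neg.mpr (h.pv_normal huv))
  pv_normal u v huv := deriv.neg.trans (congrArg Neg.neg (h.pu_normal huv))

lemma hasDerivAt_normal_sub (h : GaussWeingartenOn S ρ X N) (huv : (u, v) ∈ S) :
    HasDerivAt (fun x => N x v - (pv ρ x v / ρ x v) • pv X x v)
      (((ρ u v ^ 2)⁻¹ - (pv ρ u v / ρ u v) ^ 2) • pu X u v - (pv (pu ρ) u v / ρ u v) • pv X u v)
      u := by
  have hρ := h.contDiffAt_factor huv
  have hX := h.contDiffAt_surface huv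
  have hρ₀ := h.factor_ne_zero huv
  have hN_u : HasDerivAt (fun x => N x v) ((ρ u v ^ 2)⁻¹ • pu X u v) u := by
    rw [← h.pu_normal huv]
    exact (differentiableAt_left_of_uncurry (h.differentiableAt_normal huv)).hasDerivAt
  have hρ_u : HasDerivAt (fun x => ρ x v) (pu ρ u v) u :=
    (differentiableAt_left_of_uncurry (hρ.differentiableAt two_ne_zero)).hasDerivAt
  have hρ_vu : HasDerivAt (fun x => pv ρ x v) (pv (pu ρ) u v) u := by
    rw [← pu_pv_comm hρ]
    exact (differentiableAt_left_of_uncurry (differentiableAt_uncurry_pv hρ)).hasDerivAt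
  have hX_vu : HasDerivAt (fun x => pv X x v)
      ((pv ρ u v / ρ u v) • pu X u v + (pu ρ u v / ρ u v) • pv X u v) u := by
    rw [← h.pv_pu huv, ← pu_pv_comm hX]
    exact (differentiableAt_left_of_uncurry (differentiableAt_uncurry_pv hX)).hasDerivAt
  refine (hN_u.sub ((hρ_vu.div hρ_u hρ₀).smul hX_vu)).congr_deriv ?_
  simp only [Pi.div_apply]
  match_scalars <;> field_simp
  ring

lemma det3_pu (h : GaussWeingartenOn S ρ X N) (huv : (u, v) ∈ S) :
    det3 (pu X u v) (pu (pu X) u v) (pu (pu (pu X)) u v) =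
      pv (pu ρ) u v / ρ u v * det3 (pu X u v) (pv X u v) (N u v) := by
  have hρ := h.contDiffAt_factor huv
  have hX_u : DifferentiableAt ℝ (fun x => pu X x v) u :=
    differentiableAt_left_of_uncurry (differentiableAt_uncurry_pu (h.contDiffAt_surface huv))
  have hlog : DifferentiableAt ℝ (fun x => pu ρ x v / ρ x v) u :=
    (differentiableAt_left_of_uncurry (differentiableAt_uncurry_pu hρ)).div
      (differentiableAt_left_of_uncurry (hρ.differentiableAt two_ne_zero)) (h.factor_ne_zero huv)
  have hY := h.hasDerivAt_normal_sub huv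
  have hX_uu : deriv (fun x => pu X x v) =ᶠ[𝓝 u] fun x =>
      (pu ρ x v / ρ x v) • pu X x v + (N x v - (pv ρ x v / ρ x v) • pv X x v) := by
    have hline : ∀ᶠ x in 𝓝 u, (x, v) ∈ S :=
      (Continuous.prodMk_left v).continuousAt (h.isOpen.mem_nhds huv)
    filter_upwards [hline] with x hx
    exact (h.pu_pu hx).trans (by abel)
  refine (det3_deriv_deriv_eq hX_u hlog hY.differentiableAt hX_uu).trans ?_
  rw [hY.deriv, det3_sub_smul_rows]

lemma det3_pv (h : GaussWeingartenOn S ρ X N) (huv : (u, v) ∈ S) :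
    det3 (pv X u v) (pv (pv X) u v) (pv (pv (pv X)) u v) =
      pv (pu ρ) u v / ρ u v * det3 (pu X u v) (pv X u v) (N u v) := by
  rw [← pu_pv_comm (h.contDiffAt_factor huv), ← det3_swap_neg (pu X u v)]
  exact h.flip_neg.det3_pu (u := v) (v := u) huv

end GaussWeingartenOn

theorem planar_curvature_line_conditions_equivalent_general {S : Set (ℝ × ℝ)} {ρ : ℝ → ℝ → ℝ}
    {X N : ℝ → ℝ → ℝ × ℝ × ℝ} {u v : ℝ} (h : GaussWeingartenOn S ρ X N) (huv : (u, v) ∈ S)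
    (hdet : det3 (pu X u v) (pv X u v) (N u v) ≠ 0) :
    (det3 (pu X u v) (pu (pu X) u v) (pu (pu (pu X)) u v) = 0 ↔ pv (pu ρ) u v = 0) ∧
      (det3 (pv X u v) (pv (pv X) u v) (pv (pv (pv X)) u v) = 0 ↔ pv (pu ρ) u v = 0) := by
  rw [h.det3_pu huv, h.det3_pv huv]
  simp [hdet, h.factor_ne_zero huv]

/-- For a conformal maximal surface frame (X, N, ρ) satisfying the
Gauss–Weingarten system and the conformal frame relations with respect to the Minkowski
inner product on ℝ^{2,1}, at every point of the open set Σ the planarity of the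
u-curvature lines, the planarity of the v-curvature lines, and the condition ρ_uv = 0
are all equivalent. -/
theorem planar_curvature_line_conditions_equivalent
    (S : Set (ℝ × ℝ)) (hS : IsOpen S)
    (ρ : ℝ → ℝ → ℝ) (X N : ℝ → ℝ → ℝ × ℝ × ℝ)
    (hρ : ContDiffOn ℝ (⊤ : ℕ∞) (fun p : ℝ × ℝ => ρ p.1 p.2) S)
    (hρpos : ∀ p ∈ S, 0 < ρ p.1 p.2)
    (hX : ContDiffOn ℝ (⊤ : ℕ∞) (fun p : ℝ × ℝ => X p.1 p.2) S)
    (hN : ContDiffOn ℝ (⊤ : ℕ∞) (fun p : ℝ × ℝ => N p.1 p.2) S)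
    (hGW1 : ∀ p ∈ S, pu (pu X) p.1 p.2 =
      (pu ρ p.1 p.2 / ρ p.1 p.2) • pu X p.1 p.2
        - (pv ρ p.1 p.2 / ρ p.1 p.2) • pv X p.1 p.2 + N p.1 p.2)
    (hGW2 : ∀ p ∈ S, pv (pv X) p.1 p.2 =
      -((pu ρ p.1 p.2 / ρ p.1 p.2) • pu X p.1 p.2)
        + (pv ρ p.1 p.2 / ρ p.1 p.2) • pv X p.1 p.2 - N p.1 p.2)
    (hGW3 : ∀ p ∈ S, pv (pu X) p.1 p.2 =
      (pv ρ p.1 p.2 / ρ p.1 p.2) • pu X p.1 p.2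
        + (pu ρ p.1 p.2 / ρ p.1 p.2) • pv X p.1 p.2)
    (hGW4 : ∀ p ∈ S, pu N p.1 p.2 = ((ρ p.1 p.2) ^ 2)⁻¹ • pu X p.1 p.2)
    (hGW5 : ∀ p ∈ S, pv N p.1 p.2 = -(((ρ p.1 p.2) ^ 2)⁻¹ • pv X p.1 p.2))
    (hfr1 : ∀ p ∈ S, mink (pu X p.1 p.2) (pu X p.1 p.2) = (ρ p.1 p.2) ^ 2)
    (hfr2 : ∀ p ∈ S, mink (pv X p.1 p.2) (pv X p.1 p.2) = (ρ p.1 p.2) ^ 2)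
    (hfr3 : ∀ p ∈ S, mink (pu X p.1 p.2) (pv X p.1 p.2) = 0)
    (hfr4 : ∀ p ∈ S, mink (pu X p.1 p.2) (N p.1 p.2) = 0)
    (hfr5 : ∀ p ∈ S, mink (pv X p.1 p.2) (N p.1 p.2) = 0)
    (hfr6 : ∀ p ∈ S, mink (N p.1 p.2) (N p.1 p.2) = -1) :
    ∀ p ∈ S,
      (det3 (pu X p.1 p.2) (pu (pu X) p.1 p.2) (pu (pu (pu X)) p.1 p.2) = 0
          ↔ pv (pu ρ) p.1 p.2 = 0) ∧
      (det3 (pv X p.1 p.2) (pv (pv X) p.1 p.2) (pv (pv (pv X)) p.1 p.2) = 0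
          ↔ pv (pu ρ) p.1 p.2 = 0) := by
  intro p hp
  have hGW : GaussWeingartenOn S ρ X N :=
    ⟨hS, contDiffOn_infty.1 hρ 2, contDiffOn_infty.1 hX 2, hN.differentiableOn (by simp),
      fun u v huv => (hρpos (u, v) huv).ne', fun u v => hGW1 (u, v), fun u v => hGW2 (u, v),
      fun u v => hGW3 (u, v), fun u v => hGW4 (u, v), fun u v => hGW5 (u, v)⟩
  have hρ₂ : ρ p.1 p.2 ^ 2 ≠ 0 := pow_ne_zero 2 (hρpos p hp).ne'
  have hdet : det3 (pu X p.1 p.2) (pv X p.1 p.2) (N p.1 p.2) ≠ 0 :=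
    det3_ne_zero_of_mink_orthogonal (by rwa [hfr1 p hp]) (by rwa [hfr2 p hp])
      (by norm_num [hfr6 p hp]) (hfr3 p hp) (hfr4 p hp) (hfr5 p hp)
  exact planar_curvature_line_conditions_equivalent_general hGW hp hdet
end

section
/- Let I, J ⊆ ℝ be open intervals and let ρ : I×J → (0,∞) be a smooth solution of the PDE system such that Δρ = ρ_uu + ρ_vv is nowhere zero on I×J. Then there exist twice continuously differentiable functions f : I → ℝ and g : J → ℝ and real constants c, d with c² + d² ≠ 0 such that: ρ_u(u,v) = f(u) and ρ_v(u,v) = g(v) for all (u,v) ∈ I×J; f and g satisfy the ODE system with constants c, d on I and J respectively; f′(u) + g′(v) ≠ 0 for all (u,v) ∈ I×J; and ρ(u,v) = (f(u)² + g(v)² − 1)/(f′(u) + g′(v)) on I×J. -/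
/-!
The planar curvature line condition gives `ρ(u, v) = F(u) + G(v)`. For fixed `v` the Gauss equation
is a second order equation for `r = ρ(·, v)`, and it makes the quotient `(r'' - G''(v)) / r`
independent of `u`. Exchanging the variables, `(F'' - G'') / ρ` is a constant `k`, so that
`F''' = k F'` and `G''' = -k G'`. Multiplying the Gauss equation by `k` and substituting
`k ρ = F'' - G''` turns it into `F''² - k F'² = G''² + k G'² - k`; the left side depends on `u`
only and the right side on `v` only, and their common value is `c = d - k`.
-/

open Real Filter

open Set Topology

section Separation

variable {E : Type*} [NormedAddCommGroup E] [NormedSpace ℝ E]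
  {ρ : ℝ → ℝ → E} {I J : Set ℝ} {u v : ℝ}

theorem pu_eq_fderiv_s1 (h : DifferentiableAt ℝ (fun p : ℝ × ℝ => ρ p.1 p.2) (u, v)) :
    pu ρ u v = fderiv ℝ (fun p : ℝ × ℝ => ρ p.1 p.2) (u, v) (1, 0) := by
  have hline : HasDerivAt (fun x : ℝ => (x, v)) (1, 0) u :=
    (hasDerivAt_id u).prodMk (hasDerivAt_const u v)
  exact (h.hasFDerivAt.comp_hasDerivAt u hline).deriv

theorem differentiableAt_pu (h : ContDiffAt ℝ 2 (fun p : ℝ × ℝ => ρ p.1 p.2) (u, v)) :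
    DifferentiableAt ℝ (fun y => pu ρ u y) v := by
  have hline : DifferentiableAt ℝ (fun y : ℝ => (u, y)) v := by fun_prop
  have hfderiv : DifferentiableAt ℝ (fderiv ℝ fun p : ℝ × ℝ => ρ p.1 p.2) (u, v) :=
    (h.fderiv_right (m := 1) (by norm_num)).differentiableAt one_ne_zero
  have hpu : (fun y => pu ρ u y) =ᶠ[𝓝 v]
      fun y => fderiv ℝ (fun p : ℝ × ℝ => ρ p.1 p.2) (u, y) (1, 0) :=
    (hline.continuousAt.eventually (h.eventually (by simp))).mono fun y hy =>
      pu_eq_fderiv_s1 (hy.differentiableAt two_ne_zero)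
  exact ((hfderiv.comp v hline).clm_apply (differentiableAt_const _)).congr_of_eventuallyEq hpu

theorem add_eq_add_of_pv_pu_eq_zero (hIo : IsOpen I) (hJo : IsOpen J)
    (hI : IsPreconnected I) (hJ : IsPreconnected J)
    (hρ : ContDiffOn ℝ 2 (fun p : ℝ × ℝ => ρ p.1 p.2) (I ×ˢ J))
    (h : ∀ u ∈ I, ∀ v ∈ J, pv (pu ρ) u v = 0)
    {u₀ v₀ : ℝ} (hu₀ : u₀ ∈ I) (hv₀ : v₀ ∈ J) (hu : u ∈ I) (hv : v ∈ J) :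
    ρ u v + ρ u₀ v₀ = ρ u v₀ + ρ u₀ v := by
  have hρ' : ∀ x ∈ I, ∀ y ∈ J, ContDiffAt ℝ 2 (fun p : ℝ × ℝ => ρ p.1 p.2) (x, y) :=
    fun x hx y hy => hρ.contDiffAt ((hIo.prod hJo).mem_nhds ⟨hx, hy⟩)
  have hpu : ∀ x ∈ I, pu ρ x v = pu ρ x v₀ := fun x hx =>
    hJo.is_const_of_deriv_eq_zero hJ
      (fun y hy => (differentiableAt_pu (hρ' x hx y hy)).differentiableWithinAt) (h x hx) hv hv₀
  have hdiff : ∀ y ∈ J, ∀ x ∈ I, DifferentiableAt ℝ (fun x => ρ x y) x := fun y hy x hx =>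
    ((hρ' x hx y hy).differentiableAt two_ne_zero).comp (f := fun x : ℝ => (x, y)) x (by fun_prop)
  have hsub : ρ u v - ρ u v₀ = ρ u₀ v - ρ u₀ v₀ :=
    hIo.is_const_of_deriv_eq_zero (f := fun x => ρ x v - ρ x v₀) hI
      (fun x hx => ((hdiff v hv x hx).sub (hdiff v₀ hv₀ x hx)).differentiableWithinAt)
      (fun x hx => (deriv_fun_sub (hdiff v hv x hx) (hdiff v₀ hv₀ x hx)).trans
        (sub_eq_zero.2 (hpu x hx))) hu hu₀
  rw [sub_eq_sub_iff_add_eq_add] at hsub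
  rw [hsub, add_comm]

theorem exists_eq_add_of_pv_pu_eq_zero {n : WithTop ℕ∞} (hn : 2 ≤ n)
    (hIo : IsOpen I) (hJo : IsOpen J) (hI : IsConnected I) (hJ : IsConnected J)
    (hρ : ContDiffOn ℝ n (fun p : ℝ × ℝ => ρ p.1 p.2) (I ×ˢ J))
    (h : ∀ u ∈ I, ∀ v ∈ J, pv (pu ρ) u v = 0) :
    ∃ F G : ℝ → E, ContDiffOn ℝ n F I ∧ ContDiffOn ℝ n G J ∧
      ∀ u ∈ I, ∀ v ∈ J, ρ u v = F u + G v := by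
  obtain ⟨⟨u₀, hu₀⟩, hIc⟩ := hI
  obtain ⟨⟨v₀, hv₀⟩, hJc⟩ := hJ
  refine ⟨fun u => ρ u v₀, fun v => ρ u₀ v - ρ u₀ v₀, ?_, ?_, fun u hu v hv => ?_⟩
  · exact hρ.comp (f := fun x : ℝ => (x, v₀)) (by fun_prop) fun _ hx => ⟨hx, hv₀⟩
  · exact (hρ.comp (f := fun y : ℝ => (u₀, y)) (by fun_prop) fun _ hy => ⟨hu₀, hy⟩).sub
      contDiffOn_const
  · rw [← add_sub_assoc, eq_sub_iff_add_eq]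
    exact add_eq_add_of_pv_pu_eq_zero hIo hJo hIc hJc (hρ.of_le hn) h hu₀ hv₀ hu hv

theorem eqOn_pu_of_eqOn_add_const {F : ℝ → E} {c : E} (hI : IsOpen I)
    (h : EqOn (fun x => ρ x v) (fun x => F x + c) I) :
    EqOn (fun x => pu ρ x v) (deriv F) I :=
  fun _ hx => (h.deriv hI hx).trans (deriv_add_const c)

theorem eqOn_pv_of_eqOn_const_add {G : ℝ → E} {c : E} (hJ : IsOpen J)
    (h : EqOn (ρ u) (fun y => c + G y) J) :
    EqOn (pv ρ u) (deriv G) J :=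
  fun _ hy => (h.deriv hJ hy).trans (deriv_const_add c)

end Separation

theorem exists_deriv_deriv_eq_mul_add_of_gauss {S : Set ℝ} {r : ℝ → ℝ} {b e : ℝ}
    (hSo : IsOpen S) (hS : IsPreconnected S) (hr : ContDiffOn ℝ 2 r S) (hr0 : ∀ x ∈ S, r x ≠ 0)
    (hGauss : ∀ x ∈ S, r x * (deriv (deriv r) x + b) - (deriv r x ^ 2 + e) + 1 = 0) :
    ∃ k, ∀ x ∈ S, deriv (deriv r) x = k * r x + b := by
  -- By the Gauss equation `q = (r'' - b) / r`, written so that differentiating it needs no `r'''`.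
  let q : ℝ → ℝ := fun x => (deriv r x ^ 2 + e - 1 - 2 * b * r x) / r x ^ 2
  have hq : ∀ x ∈ S, HasDerivAt q 0 x := fun x hx => by
    have hdr : HasDerivAt r (deriv r x) x :=
      ((hr.differentiableOn two_ne_zero).differentiableAt (hSo.mem_nhds hx)).hasDerivAt
    have hddr : HasDerivAt (deriv r) (deriv (deriv r) x) x :=
      (((hr.deriv_of_isOpen (m := 1) hSo (by norm_num)).differentiableOn
        one_ne_zero).differentiableAt (hSo.mem_nhds hx)).hasDerivAt
    refine (((((hddr.fun_pow 2).add_const e).sub_const 1).fun_sub (hdr.const_mul (2 * b))).fun_div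
      (hdr.fun_pow 2) (pow_ne_zero 2 (hr0 x hx))).congr_deriv ?_
    refine div_eq_zero_iff.2 (Or.inl ?_)
    push_cast
    linear_combination 2 * r x * deriv r x * hGauss x hx
  obtain ⟨k, hk⟩ := hSo.exists_is_const_of_deriv_eq_zero hS
    (fun x hx => (hq x hx).differentiableAt.differentiableWithinAt) (fun x hx => (hq x hx).deriv)
  refine ⟨k, fun x hx => mul_left_cancel₀ (hr0 x hx) ?_⟩
  have hkx := (div_eq_iff (pow_ne_zero 2 (hr0 x hx))).1 (hk x hx)
  linear_combination hGauss x hx + hkx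

/-- The Gauss equation for a nowhere vanishing metric function of the separated form `F(u) + G(v)`
on a product of nonempty open intervals, written out in terms of the one-variable functions. -/
structure IsSeparatedGaussSolution (I J : Set ℝ) (F G : ℝ → ℝ) : Prop where
  isOpen_left : IsOpen I
  isOpen_right : IsOpen J
  isConnected_left : IsConnected I
  isConnected_right : IsConnected J
  contDiffOn_left : ContDiffOn ℝ 2 F I
  contDiffOn_right : ContDiffOn ℝ 2 G J
  add_ne_zero : ∀ u ∈ I, ∀ v ∈ J, F u + G v ≠ 0
  gauss : ∀ u ∈ I, ∀ v ∈ J, (F u + G v) * (deriv (deriv F) u + deriv (deriv G) v)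
    - (deriv F u ^ 2 + deriv G v ^ 2) + 1 = 0

namespace IsSeparatedGaussSolution

variable {I J : Set ℝ} {F G : ℝ → ℝ} {k : ℝ}

theorem swap (h : IsSeparatedGaussSolution I J F G) : IsSeparatedGaussSolution J I G F where
  isOpen_left := h.isOpen_right
  isOpen_right := h.isOpen_left
  isConnected_left := h.isConnected_right
  isConnected_right := h.isConnected_left
  contDiffOn_left := h.contDiffOn_right
  contDiffOn_right := h.contDiffOn_left
  add_ne_zero v hv u hu := by rw [add_comm]; exact h.add_ne_zero u hu v hv
  gauss v hv u hu := by linear_combination h.gauss u hu v hv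

theorem exists_deriv_deriv_sub_eq_mul_left (h : IsSeparatedGaussSolution I J F G) {v : ℝ}
    (hv : v ∈ J) :
    ∃ k, ∀ u ∈ I, deriv (deriv F) u - deriv (deriv G) v = k * (F u + G v) := by
  have hderiv : deriv (fun u => F u + G v) = deriv F := funext fun u => deriv_add_const (G v)
  obtain ⟨k, hk⟩ := exists_deriv_deriv_eq_mul_add_of_gauss (r := fun u => F u + G v)
    (b := deriv (deriv G) v) (e := deriv G v ^ 2)
    h.isOpen_left h.isConnected_left.isPreconnected (h.contDiffOn_left.add contDiffOn_const)
    (fun u hu => h.add_ne_zero u hu v hv)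
    (fun u hu => by rw [hderiv]; exact h.gauss u hu v hv)
  exact ⟨k, fun u hu => by rw [← hderiv, hk u hu, add_sub_cancel_right]⟩

theorem exists_deriv_deriv_sub_eq_mul (h : IsSeparatedGaussSolution I J F G) :
    ∃ k, ∀ u ∈ I, ∀ v ∈ J, deriv (deriv F) u - deriv (deriv G) v = k * (F u + G v) := by
  obtain ⟨v₀, hv₀⟩ := h.isConnected_right.nonempty
  obtain ⟨k, hk⟩ := h.exists_deriv_deriv_sub_eq_mul_left hv₀
  refine ⟨k, fun u hu v hv => ?_⟩
  obtain ⟨l, hl⟩ := h.swap.exists_deriv_deriv_sub_eq_mul_left hu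
  have hkl : k = -l := mul_right_cancel₀ (h.add_ne_zero u hu v₀ hv₀) <| by
    linear_combination -hk u hu - hl v₀ hv₀
  linear_combination -hl v hv - (F u + G v) * hkl

theorem deriv_deriv_deriv_left (h : IsSeparatedGaussSolution I J F G)
    (hk : ∀ u ∈ I, ∀ v ∈ J, deriv (deriv F) u - deriv (deriv G) v = k * (F u + G v)) {u : ℝ}
    (hu : u ∈ I) : deriv (deriv (deriv F)) u = k * deriv F u := by
  obtain ⟨v, hv⟩ := h.isConnected_right.nonempty
  have hF'' : EqOn (deriv (deriv F)) (fun u => k * (F u + G v) + deriv (deriv G) v) I :=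
    fun u hu => sub_eq_iff_eq_add.1 (hk u hu v hv)
  rw [hF''.deriv h.isOpen_left hu, deriv_add_const, deriv_const_mul_field, deriv_add_const]

theorem contDiffOn_deriv_left (h : IsSeparatedGaussSolution I J F G)
    (hk : ∀ u ∈ I, ∀ v ∈ J, deriv (deriv F) u - deriv (deriv G) v = k * (F u + G v)) :
    ContDiffOn ℝ 2 (deriv F) I := by
  obtain ⟨v, hv⟩ := h.isConnected_right.nonempty
  have hF' : ContDiffOn ℝ 1 (deriv F) I :=
    h.contDiffOn_left.deriv_of_isOpen h.isOpen_left (by norm_num)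
  have hF'' : ContDiffOn ℝ 1 (deriv (deriv F)) I :=
    ((contDiffOn_const.mul ((h.contDiffOn_left.of_le one_le_two).add contDiffOn_const)).add
      contDiffOn_const).congr fun u hu => sub_eq_iff_eq_add.1 (hk u hu v hv)
  exact (contDiffOn_succ_iff_deriv_of_isOpen (n := 1) h.isOpen_left).2
    ⟨hF'.differentiableOn one_ne_zero, by simp, hF''⟩

theorem exists_first_integrals (h : IsSeparatedGaussSolution I J F G)
    (hk : ∀ u ∈ I, ∀ v ∈ J, deriv (deriv F) u - deriv (deriv G) v = k * (F u + G v)) :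
    ∃ c d, d - c = k ∧ (∀ u ∈ I, deriv (deriv F) u ^ 2 = (d - c) * deriv F u ^ 2 + c) ∧
      ∀ v ∈ J, deriv (deriv G) v ^ 2 = (c - d) * deriv G v ^ 2 + d := by
  obtain ⟨u₀, hu₀⟩ := h.isConnected_left.nonempty
  obtain ⟨v₀, hv₀⟩ := h.isConnected_right.nonempty
  have hsep : ∀ u ∈ I, ∀ v ∈ J, deriv (deriv F) u ^ 2 - k * deriv F u ^ 2
      = deriv (deriv G) v ^ 2 + k * deriv G v ^ 2 - k := fun u hu v hv => by
    linear_combination (deriv (deriv F) u + deriv (deriv G) v) * hk u hu v hv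
      + k * h.gauss u hu v hv
  refine ⟨deriv (deriv F) u₀ ^ 2 - k * deriv F u₀ ^ 2,
    deriv (deriv F) u₀ ^ 2 - k * deriv F u₀ ^ 2 + k, by ring, fun u hu => ?_, fun v hv => ?_⟩
  · linear_combination hsep u hu v₀ hv₀ - hsep u₀ hu₀ v₀ hv₀
  · linear_combination -hsep u₀ hu₀ v hv

end IsSeparatedGaussSolution

theorem sq_add_sq_ne_zero_of_first_integrals {c d x y a b : ℝ} (hab : a + b ≠ 0)
    (ha : a ^ 2 = (d - c) * x ^ 2 + c) (hb : b ^ 2 = (c - d) * y ^ 2 + d) :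
    c ^ 2 + d ^ 2 ≠ 0 := by
  intro h0
  obtain ⟨hc, hd⟩ : c = 0 ∧ d = 0 := by
    simpa [add_eq_zero_iff_of_nonneg, sq_nonneg] using h0
  have ha0 : a = 0 := by simpa [hc, hd] using ha
  have hb0 : b = 0 := by simpa [hc, hd] using hb
  exact hab (by rw [ha0, hb0, add_zero])

theorem exists_isSeparatedGaussSolution {ρ : ℝ → ℝ → ℝ} {I J : Set ℝ}
    (hIo : IsOpen I) (hJo : IsOpen J) (hI : IsConnected I) (hJ : IsConnected J)
    (hρ : ContDiffOn ℝ 2 (fun p : ℝ × ℝ => ρ p.1 p.2) (I ×ˢ J))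
    (hρ0 : ∀ u ∈ I, ∀ v ∈ J, ρ u v ≠ 0)
    (hGauss : ∀ u ∈ I, ∀ v ∈ J, ρ u v * (pu (pu ρ) u v + pv (pv ρ) u v)
      - (pu ρ u v ^ 2 + pv ρ u v ^ 2) + 1 = 0)
    (hPlanar : ∀ u ∈ I, ∀ v ∈ J, pv (pu ρ) u v = 0) :
    ∃ F G : ℝ → ℝ, IsSeparatedGaussSolution I J F G ∧ ∀ u ∈ I, ∀ v ∈ J,
      ρ u v = F u + G v ∧ pu ρ u v = deriv F u ∧ pv ρ u v = deriv G v ∧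
      pu (pu ρ) u v + pv (pv ρ) u v = deriv (deriv F) u + deriv (deriv G) v := by
  obtain ⟨F, G, hF, hG, hρFG⟩ := exists_eq_add_of_pv_pu_eq_zero le_rfl hIo hJo hI hJ hρ hPlanar
  have hpu : ∀ v ∈ J, EqOn (fun u => pu ρ u v) (deriv F) I := fun v hv =>
    eqOn_pu_of_eqOn_add_const hIo fun u hu => hρFG u hu v hv
  have hpv : ∀ u ∈ I, EqOn (pv ρ u) (deriv G) J := fun u hu =>
    eqOn_pv_of_eqOn_const_add hJo (hρFG u hu)
  have hLap : ∀ u ∈ I, ∀ v ∈ J,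
      pu (pu ρ) u v + pv (pv ρ) u v = deriv (deriv F) u + deriv (deriv G) v := fun u hu v hv =>
    congrArg₂ (· + ·) ((hpu v hv).deriv hIo hu) ((hpv u hu).deriv hJo hv)
  refine ⟨F, G, ⟨hIo, hJo, hI, hJ, hF, hG, fun u hu v hv => ?_, fun u hu v hv => ?_⟩,
    fun u hu v hv => ⟨hρFG u hu v hv, hpu v hv hu, hpv u hu hv, hLap u hu v hv⟩⟩
  · rw [← hρFG u hu v hv]
    exact hρ0 u hu v hv
  · rw [← hρFG u hu v hv, ← hLap u hu v hv, ← hpu v hv hu, ← hpv u hu hv]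
    exact hGauss u hu v hv

theorem metric_separates_and_solves_ode_general
    (I J : Set ℝ) (hIo : IsOpen I) (hJo : IsOpen J)
    (hIc : I.OrdConnected) (hJc : J.OrdConnected)
    (ρ : ℝ → ℝ → ℝ)
    (hρ : ContDiffOn ℝ 2 (fun p : ℝ × ℝ => ρ p.1 p.2) (I ×ˢ J))
    (hρ0 : ∀ u ∈ I, ∀ v ∈ J, ρ u v ≠ 0)
    (hGauss : ∀ u ∈ I, ∀ v ∈ J,
      ρ u v * (pu (pu ρ) u v + pv (pv ρ) u v)
        - ((pu ρ u v) ^ 2 + (pv ρ u v) ^ 2) + 1 = 0)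
    (hPlanar : ∀ u ∈ I, ∀ v ∈ J, pv (pu ρ) u v = 0)
    (hLap : ∀ u ∈ I, ∀ v ∈ J, pu (pu ρ) u v + pv (pv ρ) u v ≠ 0) :
    ∃ f g : ℝ → ℝ, ∃ c d : ℝ,
      c ^ 2 + d ^ 2 ≠ 0 ∧
      ContDiffOn ℝ 2 f I ∧ ContDiffOn ℝ 2 g J ∧
      (∀ u ∈ I, ∀ v ∈ J, pu ρ u v = f u ∧ pv ρ u v = g v) ∧
      (∀ u ∈ I, (deriv f u) ^ 2 = (d - c) * (f u) ^ 2 + c ∧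
        deriv (deriv f) u = (d - c) * f u) ∧
      (∀ v ∈ J, (deriv g v) ^ 2 = (c - d) * (g v) ^ 2 + d ∧
        deriv (deriv g) v = (c - d) * g v) ∧
      (∀ u ∈ I, ∀ v ∈ J, deriv f u + deriv g v ≠ 0) ∧
      (∀ u ∈ I, ∀ v ∈ J,
        ρ u v = ((f u) ^ 2 + (g v) ^ 2 - 1) / (deriv f u + deriv g v)) := by
  rcases I.eq_empty_or_nonempty with rfl | hI
  · exact ⟨fun _ => 0, fun _ => 0, 1, 0, by simp [contDiffOn_const]⟩
  rcases J.eq_empty_or_nonempty with rfl | hJ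
  · exact ⟨fun _ => 0, fun _ => 0, 0, 1, by simp [contDiffOn_const]⟩
  obtain ⟨F, G, h, hρFG⟩ := exists_isSeparatedGaussSolution hIo hJo ⟨hI, hIc.isPreconnected⟩
    ⟨hJ, hJc.isPreconnected⟩ hρ hρ0 hGauss hPlanar
  obtain ⟨k, hk⟩ := h.exists_deriv_deriv_sub_eq_mul
  obtain ⟨c, d, rfl, hc, hd⟩ := h.exists_first_integrals hk
  have hk' : ∀ v ∈ J, ∀ u ∈ I, deriv (deriv G) v - deriv (deriv F) u = (c - d) * (G v + F u) :=
    fun v hv u hu => by linear_combination -hk u hu v hv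
  have hsum : ∀ u ∈ I, ∀ v ∈ J, deriv (deriv F) u + deriv (deriv G) v ≠ 0 := fun u hu v hv =>
    (hρFG u hu v hv).2.2.2 ▸ hLap u hu v hv
  obtain ⟨u₀, hu₀⟩ := hI
  obtain ⟨v₀, hv₀⟩ := hJ
  refine ⟨deriv F, deriv G, c, d,
    sq_add_sq_ne_zero_of_first_integrals (hsum u₀ hu₀ v₀ hv₀) (hc u₀ hu₀) (hd v₀ hv₀),
    h.contDiffOn_deriv_left hk, h.swap.contDiffOn_deriv_left hk',
    fun u hu v hv => ⟨(hρFG u hu v hv).2.1, (hρFG u hu v hv).2.2.1⟩,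
    fun u hu => ⟨hc u hu, h.deriv_deriv_deriv_left hk hu⟩,
    fun v hv => ⟨hd v hv, h.swap.deriv_deriv_deriv_left hk' hv⟩, hsum, fun u hu v hv => ?_⟩
  rw [eq_div_iff (hsum u hu v hv), (hρFG u hu v hv).1]
  linear_combination h.gauss u hu v hv

/-- If ρ is a smooth positive solution of the Gauss equation and the
planar curvature line condition on a product of open intervals I×J, and Δρ is nowhere
zero there, then ρ_u and ρ_v separate variables into C² functions f, g satisfying the
ODE system for some constants c, d with c² + d² ≠ 0, and
ρ = (f² + g² − 1)/(f′ + g′) on I×J. -/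
theorem metric_separates_and_solves_ode
    (I J : Set ℝ) (hIo : IsOpen I) (hJo : IsOpen J)
    (hIc : I.OrdConnected) (hJc : J.OrdConnected)
    (ρ : ℝ → ℝ → ℝ)
    (hρ : ContDiffOn ℝ (⊤ : ℕ∞) (fun p : ℝ × ℝ => ρ p.1 p.2) (I ×ˢ J))
    (hρpos : ∀ u ∈ I, ∀ v ∈ J, 0 < ρ u v)
    (hGauss : ∀ u ∈ I, ∀ v ∈ J,
      ρ u v * (pu (pu ρ) u v + pv (pv ρ) u v)
        - ((pu ρ u v) ^ 2 + (pv ρ u v) ^ 2) + 1 = 0)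
    (hPlanar : ∀ u ∈ I, ∀ v ∈ J, pv (pu ρ) u v = 0)
    (hLap : ∀ u ∈ I, ∀ v ∈ J, pu (pu ρ) u v + pv (pv ρ) u v ≠ 0) :
    ∃ f g : ℝ → ℝ, ∃ c d : ℝ,
      c ^ 2 + d ^ 2 ≠ 0 ∧
      ContDiffOn ℝ 2 f I ∧ ContDiffOn ℝ 2 g J ∧
      (∀ u ∈ I, ∀ v ∈ J, pu ρ u v = f u ∧ pv ρ u v = g v) ∧
      (∀ u ∈ I, (deriv f u) ^ 2 = (d - c) * (f u) ^ 2 + c ∧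
        deriv (deriv f) u = (d - c) * f u) ∧
      (∀ v ∈ J, (deriv g v) ^ 2 = (c - d) * (g v) ^ 2 + d ∧
        deriv (deriv g) v = (c - d) * g v) ∧
      (∀ u ∈ I, ∀ v ∈ J, deriv f u + deriv g v ≠ 0) ∧
      (∀ u ∈ I, ∀ v ∈ J,
        ρ u v = ((f u) ^ 2 + (g v) ^ 2 - 1) / (deriv f u + deriv g v)) := by
  exact metric_separates_and_solves_ode_general I J hIo hJo hIc hJc ρ (hρ.of_le (by norm_cast))
    (fun u hu v hv => (hρpos u hu v hv).ne') hGauss hPlanar hLap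
end

section
/- Let Σ ⊆ ℝ² be a nonempty connected open set and let ρ : Σ → (0,∞) be a smooth solution of the PDE system such that ρ_uu + ρ_vv is identically zero on Σ. Then ρ_u and ρ_v are constant on Σ with ρ_u² + ρ_v² = 1; consequently there exist φ ∈ [0, 2π) and a constant k ∈ ℝ such that ρ(u,v) = u·cos φ + v·sin φ + k for all (u,v) ∈ Σ. -/
/-! With `Δρ = 0` the Gauss equation is the eikonal equation `|∇ρ|² = 1`. Differentiating it shows
that the unit vector `∇ρ` lies in the kernel of the Hessian of `ρ`. A traceless symmetric `2 × 2`
matrix has determinant `-(α² + β²)`, so it is invertible unless it vanishes. Hence the Hessian is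
zero and `ρ` is affine on the connected set, with unit gradient `(cos φ, sin φ)`. -/

open Real Filter

theorem exists_mem_Ico_cos_eq_sin_eq {a b : ℝ} (h : a ^ 2 + b ^ 2 = 1) :
    ∃ φ ∈ Set.Ico (0 : ℝ) (2 * π), cos φ = a ∧ sin φ = b := by
  have hnorm : ‖(⟨a, b⟩ : ℂ)‖ = 1 := by
    rw [Complex.norm_def, Complex.normSq_mk, ← sq, ← sq, h, sqrt_one]
  obtain ⟨θ, hθ⟩ := Circle.exp_surjective ⟨⟨a, b⟩, mem_sphere_zero_iff_norm.2 hnorm⟩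
  obtain ⟨φ, hφ, hθφ⟩ := Circle.periodic_exp.exists_mem_Ico₀ two_pi_pos θ
  have hexp : Complex.exp (φ * Complex.I) = ⟨a, b⟩ := by
    rw [← Circle.coe_exp, ← hθφ, hθ]
  refine ⟨φ, hφ, ?_, ?_⟩
  · rw [← Complex.exp_ofReal_mul_I_re, hexp]
  · rw [← Complex.exp_ofReal_mul_I_im, hexp]

theorem eq_zero_of_traceless_symm_mulVec_eq_zero {R : Type*} [CommRing R] [NoZeroDivisors R]
    {a b α β : R} (hab : a ^ 2 + b ^ 2 ≠ 0) (h₁ : a * α + b * β = 0) (h₂ : a * β - b * α = 0) :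
    α = 0 ∧ β = 0 := by
  have hα : (a ^ 2 + b ^ 2) * α = 0 := by linear_combination a * h₁ - b * h₂
  have hβ : (a ^ 2 + b ^ 2) * β = 0 := by linear_combination b * h₁ + a * h₂
  exact ⟨(mul_eq_zero.1 hα).resolve_left hab, (mul_eq_zero.1 hβ).resolve_left hab⟩

section SecondDerivative

variable {E F : Type*} [NormedAddCommGroup E] [NormedSpace ℝ E]
  [NormedAddCommGroup F] [NormedSpace ℝ F]

theorem differentiableAt_fderiv_of_contDiffAt_two_s2 {f : E → F} {x : E} (hf : ContDiffAt ℝ 2 f x) :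
    DifferentiableAt ℝ (fderiv ℝ f) x :=
  (hf.fderiv_right (m := 1) one_add_one_eq_two.le).differentiableAt one_ne_zero

theorem eventually_differentiableAt_of_contDiffAt_two {f : E → F} {x : E}
    (hf : ContDiffAt ℝ 2 f x) : ∀ᶠ y in nhds x, DifferentiableAt ℝ f y :=
  (hf.eventually (by simp)).mono fun _ hy => hy.differentiableAt two_ne_zero

theorem hasFDerivAt_fderiv_apply {f : E → F} {x : E} (hf : DifferentiableAt ℝ (fderiv ℝ f) x)
    (v : E) : HasFDerivAt (fun y => fderiv ℝ f y v) ((fderiv ℝ (fderiv ℝ f) x).flip v) x := by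
  simpa only [ContinuousLinearMap.comp_zero, zero_add] using
    hf.hasFDerivAt.clm_apply (hasFDerivAt_const v x)

theorem exists_affine_of_fderiv_fderiv_eq_zero {f : E → F} {S : Set E}
    (hS : IsOpen S) (hSc : IsPreconnected S) (hf : DifferentiableOn ℝ f S)
    (hf' : DifferentiableOn ℝ (fderiv ℝ f) S) (hzero : S.EqOn (fderiv ℝ (fderiv ℝ f)) 0) :
    ∃ (L : E →L[ℝ] F) (c : F), ∀ x ∈ S, fderiv ℝ f x = L ∧ f x = L x + c := by
  obtain ⟨L, hL⟩ := hS.exists_is_const_of_fderiv_eq_zero hSc hf' hzero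
  obtain ⟨c, hc⟩ := hS.exists_eq_add_of_fderiv_eq hSc hf L.differentiableOn
    fun x hx => (hL x hx).trans L.hasFDerivAt.fderiv.symm
  exact ⟨L, c, fun x hx => ⟨hL x hx, hc hx⟩⟩

theorem fderiv_mul_fderiv_fderiv_add_eq_zero_of_sq_add_sq_eq {f : E → ℝ} {x v w : E} {c : ℝ}
    (hf : DifferentiableAt ℝ (fderiv ℝ f) x)
    (hc : ∀ᶠ y in nhds x, fderiv ℝ f y v ^ 2 + fderiv ℝ f y w ^ 2 = c) (z : E) :
    fderiv ℝ f x v * fderiv ℝ (fderiv ℝ f) x z v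
      + fderiv ℝ f x w * fderiv ℝ (fderiv ℝ f) x z w = 0 := by
  have hsq := ((hasFDerivAt_fderiv_apply hf v).pow 2).add ((hasFDerivAt_fderiv_apply hf w).pow 2)
  have hconst : HasFDerivAt (fun y => fderiv ℝ f y v ^ 2 + fderiv ℝ f y w ^ 2) (0 : E →L[ℝ] ℝ) x :=
    (hasFDerivAt_const c x).congr_of_eventuallyEq hc
  have hz : 2 * fderiv ℝ f x v * fderiv ℝ (fderiv ℝ f) x z v
      + 2 * fderiv ℝ f x w * fderiv ℝ (fderiv ℝ f) x z w = 0 := by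
    simpa using DFunLike.congr_fun (hsq.unique hconst) z
  linear_combination hz / 2

end SecondDerivative

theorem fderiv_fderiv_eq_zero_of_eikonal_of_laplacian_eq_zero {f : ℝ × ℝ → ℝ} {p : ℝ × ℝ} {c : ℝ}
    (hf : ContDiffAt ℝ 2 f p) (hc : c ≠ 0)
    (heikonal : ∀ᶠ q in nhds p, fderiv ℝ f q (1, 0) ^ 2 + fderiv ℝ f q (0, 1) ^ 2 = c)
    (hLap : fderiv ℝ (fderiv ℝ f) p (1, 0) (1, 0)
      + fderiv ℝ (fderiv ℝ f) p (0, 1) (0, 1) = 0) :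
    fderiv ℝ (fderiv ℝ f) p = 0 := by
  have hsymm : fderiv ℝ (fderiv ℝ f) p (0, 1) (1, 0) = fderiv ℝ (fderiv ℝ f) p (1, 0) (0, 1) :=
    hf.isSymmSndFDerivAt (by simp) _ _
  have hker := fderiv_mul_fderiv_fderiv_add_eq_zero_of_sq_add_sq_eq
    (differentiableAt_fderiv_of_contDiffAt_two_s2 hf) heikonal
  have hker₂ := hker (0, 1)
  rw [hsymm, eq_neg_of_add_eq_zero_right hLap, mul_neg, ← sub_eq_add_neg] at hker₂
  obtain ⟨huu, huv⟩ := eq_zero_of_traceless_symm_mulVec_eq_zero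
    (heikonal.self_of_nhds.trans_ne hc) (hker (1, 0)) hker₂
  have hvv : fderiv ℝ (fderiv ℝ f) p (0, 1) (0, 1) = 0 := by linarith
  ext <;> simp [huu, huv, hsymm, hvv]

section PartialDerivatives

open Function

variable {E : Type*} [NormedAddCommGroup E] [NormedSpace ℝ E] {f : ℝ → ℝ → E} {p : ℝ × ℝ}

theorem pu_eq_fderiv_uncurry (hf : DifferentiableAt ℝ (uncurry f) p) :
    pu f p.1 p.2 = fderiv ℝ (uncurry f) p (1, 0) :=
  (hf.hasFDerivAt.comp_hasDerivAt (f := fun x => (x, p.2)) p.1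
    ((hasDerivAt_id _).prodMk (hasDerivAt_const _ _))).deriv

theorem pv_eq_fderiv_uncurry (hf : DifferentiableAt ℝ (uncurry f) p) :
    pv f p.1 p.2 = fderiv ℝ (uncurry f) p (0, 1) :=
  (hf.hasFDerivAt.comp_hasDerivAt (f := fun y => (p.1, y)) p.2
    ((hasDerivAt_const _ _).prodMk (hasDerivAt_id _))).deriv

theorem pu_pu_eq_fderiv_fderiv_uncurry (hf : ContDiffAt ℝ 2 (uncurry f) p) :
    pu (pu f) p.1 p.2 = fderiv ℝ (fderiv ℝ (uncurry f)) p (1, 0) (1, 0) := by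
  have heq : ∀ᶠ q in nhds p, uncurry (pu f) q = fderiv ℝ (uncurry f) q (1, 0) :=
    (eventually_differentiableAt_of_contDiffAt_two hf).mono fun _ => pu_eq_fderiv_uncurry
  have hpu := (hasFDerivAt_fderiv_apply
    (differentiableAt_fderiv_of_contDiffAt_two_s2 hf) (1, 0)).congr_of_eventuallyEq heq
  rw [pu_eq_fderiv_uncurry hpu.differentiableAt, hpu.fderiv, ContinuousLinearMap.flip_apply]

theorem pv_pv_eq_fderiv_fderiv_uncurry (hf : ContDiffAt ℝ 2 (uncurry f) p) :
    pv (pv f) p.1 p.2 = fderiv ℝ (fderiv ℝ (uncurry f)) p (0, 1) (0, 1) := by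
  have heq : ∀ᶠ q in nhds p, uncurry (pv f) q = fderiv ℝ (uncurry f) q (0, 1) :=
    (eventually_differentiableAt_of_contDiffAt_two hf).mono fun _ => pv_eq_fderiv_uncurry
  have hpv := (hasFDerivAt_fderiv_apply
    (differentiableAt_fderiv_of_contDiffAt_two_s2 hf) (0, 1)).congr_of_eventuallyEq heq
  rw [pv_eq_fderiv_uncurry hpv.differentiableAt, hpv.fderiv, ContinuousLinearMap.flip_apply]

end PartialDerivatives

theorem clm_apply_eq_fst_smul_add_snd_smul {E : Type*} [NormedAddCommGroup E] [NormedSpace ℝ E]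
    (L : ℝ × ℝ →L[ℝ] E) (p : ℝ × ℝ) : L p = p.1 • L (1, 0) + p.2 • L (0, 1) := by
  rw [← map_smul, ← map_smul, ← map_add]
  simp

theorem exists_affine_of_eikonal_of_laplacian_eq_zero {S : Set (ℝ × ℝ)}
    (hS : IsOpen S) (hSc : IsPreconnected S) {f : ℝ → ℝ → ℝ} {c : ℝ} (hc : c ≠ 0)
    (hf : ContDiffOn ℝ 2 (Function.uncurry f) S)
    (heikonal : ∀ p ∈ S, pu f p.1 p.2 ^ 2 + pv f p.1 p.2 ^ 2 = c)
    (hLap : ∀ p ∈ S, pu (pu f) p.1 p.2 + pv (pv f) p.1 p.2 = 0) :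
    ∃ a b k : ℝ, ∀ p ∈ S, pu f p.1 p.2 = a ∧ pv f p.1 p.2 = b ∧
      f p.1 p.2 = p.1 * a + p.2 * b + k := by
  have hf₂ (p) (hp : p ∈ S) : ContDiffAt ℝ 2 (Function.uncurry f) p :=
    hf.contDiffAt (hS.mem_nhds hp)
  have hdiff (p) (hp : p ∈ S) : DifferentiableAt ℝ (Function.uncurry f) p :=
    (hf₂ p hp).differentiableAt two_ne_zero
  have hzero : S.EqOn (fderiv ℝ (fderiv ℝ (Function.uncurry f))) 0 := by
    intro p hp
    refine fderiv_fderiv_eq_zero_of_eikonal_of_laplacian_eq_zero (hf₂ p hp) hc ?_ ?_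
    · filter_upwards [hS.mem_nhds hp] with q hq
      rw [← pu_eq_fderiv_uncurry (hdiff q hq), ← pv_eq_fderiv_uncurry (hdiff q hq), heikonal q hq]
    · rw [← pu_pu_eq_fderiv_fderiv_uncurry (hf₂ p hp),
        ← pv_pv_eq_fderiv_fderiv_uncurry (hf₂ p hp), hLap p hp]
  obtain ⟨L, k, hL⟩ := exists_affine_of_fderiv_fderiv_eq_zero hS hSc
    (fun p hp => (hdiff p hp).differentiableWithinAt)
    (fun p hp =>
      (differentiableAt_fderiv_of_contDiffAt_two_s2 (hf₂ p hp)).differentiableWithinAt) hzero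
  refine ⟨L (1, 0), L (0, 1), k, fun p hp => ⟨?_, ?_, ?_⟩⟩
  · rw [pu_eq_fderiv_uncurry (hdiff p hp), (hL p hp).1]
  · rw [pv_eq_fderiv_uncurry (hdiff p hp), (hL p hp).1]
  · exact (hL p hp).2.trans (congrArg (· + k) (clm_apply_eq_fst_smul_add_snd_smul L p))

theorem harmonic_case_metric_is_linear_general {S : Set (ℝ × ℝ)} (hS : IsOpen S)
    (hSc : IsConnected S) {ρ : ℝ → ℝ → ℝ} (hρ : ContDiffOn ℝ 2 (fun p : ℝ × ℝ => ρ p.1 p.2) S)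
    (hGauss : ∀ p ∈ S,
      ρ p.1 p.2 * (pu (pu ρ) p.1 p.2 + pv (pv ρ) p.1 p.2)
        - ((pu ρ p.1 p.2) ^ 2 + (pv ρ p.1 p.2) ^ 2) + 1 = 0)
    (hLap : ∀ p ∈ S, pu (pu ρ) p.1 p.2 + pv (pv ρ) p.1 p.2 = 0) :
    (∃ a b : ℝ, a ^ 2 + b ^ 2 = 1 ∧
      ∀ p ∈ S, pu ρ p.1 p.2 = a ∧ pv ρ p.1 p.2 = b) ∧
    ∃ φ ∈ Set.Ico (0 : ℝ) (2 * π), ∃ k : ℝ,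
      ∀ p ∈ S, ρ p.1 p.2 = p.1 * Real.cos φ + p.2 * Real.sin φ + k := by
  have heikonal : ∀ p ∈ S, pu ρ p.1 p.2 ^ 2 + pv ρ p.1 p.2 ^ 2 = 1 := fun p hp => by
    linear_combination ρ p.1 p.2 * hLap p hp - hGauss p hp
  obtain ⟨a, b, k, hρabk⟩ := exists_affine_of_eikonal_of_laplacian_eq_zero
    hS hSc.isPreconnected one_ne_zero hρ heikonal hLap
  have hab : a ^ 2 + b ^ 2 = 1 := by
    obtain ⟨p, hp⟩ := hSc.nonempty
    rw [← (hρabk p hp).1, ← (hρabk p hp).2.1, heikonal p hp]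
  obtain ⟨φ, hφ, rfl, rfl⟩ := exists_mem_Ico_cos_eq_sin_eq hab
  exact ⟨⟨_, _, hab, fun p hp => ⟨(hρabk p hp).1, (hρabk p hp).2.1⟩⟩,
    φ, hφ, k, fun p hp => (hρabk p hp).2.2⟩

/-- If ρ is a smooth positive solution of the Gauss equation and the
planar curvature line condition on a nonempty connected open set Σ ⊆ ℝ², with Δρ ≡ 0,
then ρ_u and ρ_v are constant with ρ_u² + ρ_v² = 1, and hence
ρ(u,v) = u·cos φ + v·sin φ + k for some φ ∈ [0, 2π) and k ∈ ℝ. -/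
theorem harmonic_case_metric_is_linear
    (S : Set (ℝ × ℝ)) (hS : IsOpen S) (hSc : IsConnected S)
    (ρ : ℝ → ℝ → ℝ)
    (hρ : ContDiffOn ℝ (⊤ : ℕ∞) (fun p : ℝ × ℝ => ρ p.1 p.2) S)
    (hρpos : ∀ p ∈ S, 0 < ρ p.1 p.2)
    (hGauss : ∀ p ∈ S,
      ρ p.1 p.2 * (pu (pu ρ) p.1 p.2 + pv (pv ρ) p.1 p.2)
        - ((pu ρ p.1 p.2) ^ 2 + (pv ρ p.1 p.2) ^ 2) + 1 = 0)
    (hPlanar : ∀ p ∈ S, pv (pu ρ) p.1 p.2 = 0)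
    (hLap : ∀ p ∈ S, pu (pu ρ) p.1 p.2 + pv (pv ρ) p.1 p.2 = 0) :
    (∃ a b : ℝ, a ^ 2 + b ^ 2 = 1 ∧
      ∀ p ∈ S, pu ρ p.1 p.2 = a ∧ pv ρ p.1 p.2 = b) ∧
    ∃ φ ∈ Set.Ico (0 : ℝ) (2 * π), ∃ k : ℝ,
      ∀ p ∈ S, ρ p.1 p.2 = p.1 * Real.cos φ + p.2 * Real.sin φ + k :=
  harmonic_case_metric_is_linear_general hS hSc (hρ.of_le (WithTop.coe_le_coe.2 le_top)) hGauss hLap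
end

section
/- Let c, d ∈ ℝ with c² + d² ≠ 0, and let f : ℝ → ℝ be a twice continuously differentiable function satisfying (f′)² = (d−c)f² + c and f″ = (d−c)f on all of ℝ. Then f has a zero (i.e., there exists u₀ ∈ ℝ with f(u₀) = 0) if and only if c > 0 or f is identically zero. -/
open Real

/-!
At a zero of `f` the first equation reads `c = (f')² ≥ 0`. If `c = 0`, it becomes
`(f')² = (d - c) f²` everywhere, so `|f'| ≤ K |f|` and Grönwall's inequality forces `f` to vanish
identically. Conversely let `c > 0`. If `d ≥ c`, then `(f')² ≥ c`, so `f'` has constant sign by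
Darboux's theorem and is bounded away from zero, whence `f` is surjective. If `d < c`, then
`f'' = -ω² f` with `ω = √(c - d)`, so `f` changes sign under translation by the half-period `π / ω`.
-/

section Gronwall

variable {E : Type*} [NormedAddCommGroup E] [NormedSpace ℝ E] {f : ℝ → E} {K a : ℝ}

theorem eq_zero_right_of_norm_deriv_le_mul_norm (hf : Differentiable ℝ f)
    (hbound : ∀ x, ‖deriv f x‖ ≤ K * ‖f x‖) (ha : f a = 0) {x : ℝ} (hx : a ≤ x) : f x = 0 :=
  eq_zero_of_abs_deriv_le_mul_abs_self_of_eq_zero_right hf.continuous.continuousOn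
    (fun y _ ↦ (hf y).hasDerivAt.hasDerivWithinAt) ha (fun y _ ↦ hbound y) x ⟨hx, le_rfl⟩

theorem eq_zero_of_norm_deriv_le_mul_norm (hf : Differentiable ℝ f)
    (hbound : ∀ x, ‖deriv f x‖ ≤ K * ‖f x‖) (ha : f a = 0) (x : ℝ) : f x = 0 := by
  rcases le_total a x with hax | hxa
  · exact eq_zero_right_of_norm_deriv_le_mul_norm hf hbound ha hax
  · have hreflect : f (-(-x)) = 0 :=
      eq_zero_right_of_norm_deriv_le_mul_norm (f := fun y ↦ f (-y)) (K := K) (a := -a)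
        (hf.comp differentiable_neg)
        (fun y ↦ by simpa only [deriv_comp_neg, norm_neg] using hbound (-y))
        (by rwa [neg_neg]) (neg_le_neg hxa)
    rwa [neg_neg] at hreflect

theorem eq_zero_of_norm_deriv_sq_le_mul_norm_sq (hf : Differentiable ℝ f)
    (hbound : ∀ x, ‖deriv f x‖ ^ 2 ≤ K * ‖f x‖ ^ 2) (ha : f a = 0) (x : ℝ) : f x = 0 := by
  refine eq_zero_of_norm_deriv_le_mul_norm (K := √K) hf (fun y ↦ ?_) ha x
  calc ‖deriv f y‖ ≤ √(K * ‖f y‖ ^ 2) := le_sqrt_of_sq_le (hbound y)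
    _ = √K * ‖f y‖ := by rw [sqrt_mul' K (sq_nonneg _), sqrt_sq (norm_nonneg _)]

end Gronwall

section Slope

variable {f : ℝ → ℝ} {m : ℝ}

theorem surjective_of_le_deriv (hf : Differentiable ℝ f) (hm : 0 < m)
    (hderiv : ∀ x, m ≤ deriv f x) : Function.Surjective f := by
  have hgrowth := mul_sub_le_image_sub_of_le_deriv hf hderiv
  have hline_top : Filter.Tendsto (fun x ↦ f 0 + m * x) .atTop .atTop :=
    Filter.tendsto_atTop_add_const_left _ _ (Filter.tendsto_id.const_mul_atTop hm)
  have hline_bot : Filter.Tendsto (fun x ↦ f 0 + m * x) .atBot .atBot :=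
    Filter.tendsto_atBot_add_const_left _ _ (Filter.tendsto_id.const_mul_atBot hm)
  refine hf.continuous.surjective (Filter.tendsto_atTop_mono' _ ?_ hline_top)
    (Filter.tendsto_atBot_mono' _ ?_ hline_bot)
  · filter_upwards [Filter.eventually_ge_atTop 0] with x hx
    linarith [hgrowth hx]
  · filter_upwards [Filter.eventually_le_atBot 0] with x hx
    linarith [hgrowth hx]

theorem surjective_of_le_abs_deriv (hf : Differentiable ℝ f) (hm : 0 < m)
    (hderiv : ∀ x, m ≤ |deriv f x|) : Function.Surjective f := by
  have hne : ∀ x ∈ Set.univ, deriv f x ≠ 0 := fun x _ ↦ abs_pos.mp (hm.trans_le (hderiv x))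
  rcases hasDerivWithinAt_forall_lt_or_forall_gt_of_forall_ne convex_univ
    (fun x _ ↦ (hf x).hasDerivAt.hasDerivWithinAt) hne with hneg | hpos
  · have hsurj : Function.Surjective fun x ↦ -f x :=
      surjective_of_le_deriv hf.fun_neg hm fun x ↦ by
        simpa only [deriv.fun_neg, abs_of_neg (hneg x trivial)] using hderiv x
    exact fun y ↦ (hsurj (-y)).imp fun _ ↦ neg_inj.mp
  · exact surjective_of_le_deriv hf hm fun x ↦ by
      simpa only [abs_of_pos (hpos x trivial)] using hderiv x

end Slope

theorem antiperiodic_of_deriv_deriv_eq_neg_sq_smul {E : Type*} [NormedAddCommGroup E]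
    [NormedSpace ℝ E] {f : ℝ → E} {ω : ℝ} (hω : ω ≠ 0) (hf : Differentiable ℝ f)
    (hf' : Differentiable ℝ (deriv f)) (hode : ∀ x, deriv (deriv f) x = -(ω ^ 2) • f x) :
    Function.Antiperiodic f (π / ω) := by
  intro x
  -- The Wronskian of `f` and the solution `y ↦ sin (ω (y - x))` of the same equation.
  let W : ℝ → E := fun y ↦ sin (ω * (y - x)) • deriv f y - (ω * cos (ω * (y - x))) • f y
  have hW : ∀ y, HasDerivAt W 0 y := by
    intro y
    have hphase : HasDerivAt (fun y ↦ ω * (y - x)) ω y := by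
      simpa using ((hasDerivAt_id y).sub_const x).const_mul ω
    refine ((hphase.sin.smul (hf' y).hasDerivAt).sub
      ((hphase.cos.const_mul ω).smul (hf y).hasDerivAt)).congr_deriv ?_
    rw [hode y]
    module
  have hconst : W (x + π / ω) = W x :=
    is_const_of_deriv_eq_zero (fun y ↦ (hW y).differentiableAt) (fun y ↦ (hW y).deriv) _ _
  have hsmul : ω • f (x + π / ω) = ω • -f x := by
    simpa [W, mul_div_cancel₀ π hω] using hconst
  exact smul_right_injective E hω hsmul

theorem exists_eq_zero_of_antiperiodic {α β : Type*} [TopologicalSpace α] [PreconnectedSpace α]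
    [Nonempty α] [Add α] [AddCommGroup β] [LinearOrder β] [IsOrderedAddMonoid β]
    [TopologicalSpace β] [OrderClosedTopology β] {f : α → β} {T : α} (hf : Continuous f)
    (hT : Function.Antiperiodic f T) : ∃ x, f x = 0 := by
  obtain ⟨x⟩ := ‹Nonempty α›
  rcases le_total (f x) 0 with hx | hx
  · exact mem_range_of_exists_le_of_exists_ge hf ⟨x, hx⟩ ⟨x + T, by rwa [hT x, neg_nonneg]⟩
  · exact mem_range_of_exists_le_of_exists_ge hf ⟨x + T, by rwa [hT x, neg_nonpos]⟩ ⟨x, hx⟩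

/-- A C² solution f on ℝ of (f′)² = (d−c)f² + c, f″ = (d−c)f,
with c² + d² ≠ 0, has a zero if and only if c > 0 or f is identically zero. -/
theorem ode_solution_has_zero_iff
    (c d : ℝ) (hcd : c ^ 2 + d ^ 2 ≠ 0) (f : ℝ → ℝ)
    (hf : ContDiff ℝ 2 f)
    (hode1 : ∀ u, (deriv f u) ^ 2 = (d - c) * (f u) ^ 2 + c)
    (hode2 : ∀ u, deriv (deriv f) u = (d - c) * f u) :
    (∃ u₀ : ℝ, f u₀ = 0) ↔ (0 < c ∨ ∀ u, f u = 0) := by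
  have hdiff : Differentiable ℝ f := hf.differentiable two_ne_zero
  constructor
  · rintro ⟨u₀, hu₀⟩
    have hc : 0 ≤ c := by simpa [hode1, hu₀] using sq_nonneg (deriv f u₀)
    refine hc.lt_or_eq.imp_right fun hc₀ ↦ ?_
    exact eq_zero_of_norm_deriv_sq_le_mul_norm_sq (K := d - c) hdiff
      (fun u ↦ by simp only [norm_eq_abs, sq_abs, hode1 u, ← hc₀, add_zero, le_refl]) hu₀
  · rintro (hc | hzero)
    · rcases le_or_gt 0 (d - c) with hdc | hdc
      · have hslope : ∀ u, √c ≤ |deriv f u| := fun u ↦ by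
          rw [← sqrt_sq_eq_abs, hode1 u]
          exact sqrt_le_sqrt (le_add_of_nonneg_left (by positivity))
        exact surjective_of_le_abs_deriv hdiff (sqrt_pos.mpr hc) hslope 0
      · have hω : 0 < c - d := by linarith
        have hosc : ∀ u, deriv (deriv f) u = -(√(c - d) ^ 2) • f u := fun u ↦ by
          rw [hode2 u, sq_sqrt hω.le, neg_sub, smul_eq_mul]
        exact exists_eq_zero_of_antiperiodic hf.continuous <|
          antiperiodic_of_deriv_deriv_eq_neg_sq_smul (sqrt_pos.mpr hω).ne' hdiff
            hf.differentiable_deriv_two hosc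
    · exact ⟨0, hzero 0⟩
end

section
/- Let c, d ∈ ℝ with c² + d² ≠ 0, and let f, g : ℝ → ℝ be twice continuously differentiable functions satisfying the ODE system with constants c, d on all of ℝ, i.e., (f′)² = (d−c)f² + c, f″ = (d−c)f, (g′)² = (c−d)g² + d, g″ = (c−d)g. Then at least one of f and g has a zero: there exists u₀ with f(u₀) = 0, or there exists v₀ with g(v₀) = 0. -/
open Real

/-!
If `f * f'' ≤ 0` and `f` is positive, then `f` is concave on `ℝ`, so its graph lies below each of
its tangents, and a tangent of nonzero slope reaches zero. The same argument for `-f` shows that `f`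
vanishes somewhere unless it is constant. Since `d - c` and `c - d` are not both positive, at least
one of `f'' = (d - c) f` and `g'' = (c - d) g` forces `f * f'' ≤ 0` or `g * g'' ≤ 0`. A constant
solution is zero if `c ≠ d`, and if `c = d` then `f' ^ 2 = c ≠ 0` excludes constants.
-/

lemma le_tangent_of_concaveOn {S : Set ℝ} {f : ℝ → ℝ} {m x y : ℝ} (hf : ConcaveOn ℝ S f)
    (hx : x ∈ S) (hy : y ∈ S) (hm : HasDerivWithinAt f m S x) : f y ≤ f x + m * (y - x) := by
  rcases lt_trichotomy y x with hyx | rfl | hxy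
  · have hslope := hf.le_slope_of_hasDerivWithinAt hy hx hyx hm
    rw [slope_def_field, le_div_iff₀ (sub_pos.2 hyx)] at hslope
    linarith
  · simp
  · have hslope := hf.slope_le_of_hasDerivWithinAt hx hy hxy hm
    rw [slope_def_field, div_le_iff₀ (sub_pos.2 hxy)] at hslope
    linarith

lemma exists_nonpos_of_concaveOn_of_deriv_ne_zero {f : ℝ → ℝ} {u : ℝ}
    (hf : ConcaveOn ℝ Set.univ f) (hu : deriv f u ≠ 0) : ∃ v, f v ≤ 0 := by
  have hd := (differentiableAt_of_deriv_ne_zero hu).hasDerivAt.hasDerivWithinAt (s := Set.univ)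
  refine ⟨u - f u / deriv f u,
    (le_tangent_of_concaveOn hf (Set.mem_univ u) (Set.mem_univ _) hd).trans_eq ?_⟩
  field_simp
  ring

lemma exists_nonpos_of_mul_deriv2_nonpos {f : ℝ → ℝ} {u : ℝ} (hf : Differentiable ℝ f)
    (hf' : Differentiable ℝ (deriv f)) (hf'' : ∀ x, f x * deriv (deriv f) x ≤ 0)
    (hu : deriv f u ≠ 0) : ∃ v, f v ≤ 0 := by
  by_contra! hpos
  have hconcave : ConcaveOn ℝ Set.univ f := concaveOn_univ_of_deriv2_nonpos hf hf' fun x ↦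
    nonpos_of_mul_nonpos_right (hf'' x) (hpos x)
  obtain ⟨v, hv⟩ := exists_nonpos_of_concaveOn_of_deriv_ne_zero hconcave hu
  exact (hpos v).not_ge hv

lemma exists_eq_zero_of_mul_deriv2_nonpos {f : ℝ → ℝ} {u : ℝ} (hf : Differentiable ℝ f)
    (hf' : Differentiable ℝ (deriv f)) (hf'' : ∀ x, f x * deriv (deriv f) x ≤ 0)
    (hu : deriv f u ≠ 0) : ∃ v, f v = 0 := by
  have deriv_neg_eq (h : ℝ → ℝ) : deriv (-h) = -deriv h := funext fun _ ↦ deriv.neg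
  have hneg : ∃ v, (-f) v ≤ 0 := exists_nonpos_of_mul_deriv2_nonpos (u := u) hf.neg
    (by simpa only [deriv_neg_eq] using hf'.neg)
    (by simpa only [deriv_neg_eq, Pi.neg_apply, neg_mul_neg] using hf'')
    (by simpa only [deriv_neg_eq, Pi.neg_apply, neg_ne_zero] using hu)
  exact mem_range_of_exists_le_of_exists_ge hf.continuous
    (exists_nonpos_of_mul_deriv2_nonpos hf hf' hf'' hu)
    (hneg.imp fun _ ↦ neg_nonpos.1)

lemma exists_eq_zero_of_deriv2_eq_mul {k : ℝ} {f : ℝ → ℝ} (hk : k ≤ 0)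
    (hf : Differentiable ℝ f) (hf' : Differentiable ℝ (deriv f))
    (hf2 : ∀ u, deriv (deriv f) u = k * f u) (hne : k = 0 → ∃ u, deriv f u ≠ 0) :
    ∃ u, f u = 0 := by
  by_cases hconst : ∃ u, deriv f u ≠ 0
  · obtain ⟨u, hu⟩ := hconst
    refine exists_eq_zero_of_mul_deriv2_nonpos hf hf' (fun x ↦ ?_) hu
    rw [hf2, mul_left_comm]
    exact mul_nonpos_of_nonpos_of_nonneg hk (mul_self_nonneg _)
  · have hk0 : k ≠ 0 := mt hne hconst
    have hderiv : deriv f = 0 := by simpa [funext_iff] using hconst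
    exact ⟨0, by simpa [hderiv, hk0] using hf2 0⟩

theorem at_least_one_of_f_g_has_zero_general {k : ℝ} {f g : ℝ → ℝ}
    (hf : Differentiable ℝ f) (hf' : Differentiable ℝ (deriv f))
    (hg : Differentiable ℝ g) (hg' : Differentiable ℝ (deriv g))
    (hf2 : ∀ u, deriv (deriv f) u = k * f u) (hg2 : ∀ v, deriv (deriv g) v = -k * g v)
    (hne : k = 0 → (∃ u, deriv f u ≠ 0) ∨ ∃ v, deriv g v ≠ 0) :
    (∃ u₀, f u₀ = 0) ∨ ∃ v₀, g v₀ = 0 := by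
  rcases lt_trichotomy k 0 with hk | hk | hk
  · exact .inl (exists_eq_zero_of_deriv2_eq_mul hk.le hf hf' hf2 fun h ↦ absurd h hk.ne)
  · exact (hne hk).imp
      (fun h ↦ exists_eq_zero_of_deriv2_eq_mul hk.le hf hf' hf2 fun _ ↦ h)
      (fun h ↦ exists_eq_zero_of_deriv2_eq_mul (neg_nonpos.2 hk.ge) hg hg' hg2 fun _ ↦ h)
  · exact .inr (exists_eq_zero_of_deriv2_eq_mul (neg_nonpos.2 hk.le) hg hg' hg2
      fun h ↦ absurd h (neg_ne_zero.2 hk.ne'))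

/-- If C² functions f, g on ℝ satisfy the ODE system
(f′)² = (d−c)f² + c, f″ = (d−c)f, (g′)² = (c−d)g² + d, g″ = (c−d)g with
c² + d² ≠ 0, then at least one of f and g has a zero. -/
theorem at_least_one_of_f_g_has_zero
    (c d : ℝ) (hcd : c ^ 2 + d ^ 2 ≠ 0) (f g : ℝ → ℝ)
    (hf : ContDiff ℝ 2 f) (hg : ContDiff ℝ 2 g)
    (hf1 : ∀ u, (deriv f u) ^ 2 = (d - c) * (f u) ^ 2 + c)
    (hf2 : ∀ u, deriv (deriv f) u = (d - c) * f u)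
    (hg1 : ∀ v, (deriv g v) ^ 2 = (c - d) * (g v) ^ 2 + d)
    (hg2 : ∀ v, deriv (deriv g) v = (c - d) * g v) :
    (∃ u₀ : ℝ, f u₀ = 0) ∨ (∃ v₀ : ℝ, g v₀ = 0) := by
  refine at_least_one_of_f_g_has_zero_general (hf.differentiable two_ne_zero)
    hf.differentiable_deriv_two (hg.differentiable two_ne_zero) hg.differentiable_deriv_two hf2
    (by simpa only [neg_sub] using hg2) fun hdc ↦ .inl ⟨0, fun hf0 ↦ hcd ?_⟩
  have hc : c = 0 := by simpa [hf0, hdc] using (hf1 0).symm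
  simp [hc, show d = 0 by linarith]
end

section
/- Let c, d ∈ ℝ with c² + d² ≠ 0 and d ≥ 0, and let f : ℝ → ℝ be a twice continuously differentiable function satisfying (f′)² = (d−c)f² + c and f″ = (d−c)f on all of ℝ. If f attains a positive value somewhere (there exists u₁ with f(u₁) > 0), then f attains the value 1: there exists u₀ ∈ ℝ with f(u₀) = 1. -/
open Real

/-!
The characteristic roots `±σ` of `f″ = k f`, where `σ² = k`, factor the equation:
`(f′ + σ f)′ = σ (f′ + σ f)`, so `f′ + σ f` is an exponential. In the phase plane this says that
`(f, f′)` sweeps out its whole energy level `p² - k y² = const` when `k < 0` (an ellipse), and a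
whole branch of it when `0 < k` (a hyperbola); for `k = 0` and `f′ ≠ 0` it sweeps out the line
`p = f′`. On the level `c`, every `y` with `0 ≤ k y² + c` is the position of the point
`(y, √(k y² + c))`; for `k = d - c` and `y = 1` this is `(1, √d)`.
-/

section CharacteristicRoot

variable {𝔸 : Type*} [NormedRing 𝔸] [NormedAlgebra ℝ 𝔸] [CompleteSpace 𝔸]

lemma eq_exp_smul_mul_of_hasDerivAt {a : 𝔸} {g : ℝ → 𝔸} (hg : ∀ t, HasDerivAt g (a * g t) t)
    (t₀ t : ℝ) : g t = NormedSpace.exp ((t - t₀) • a) * g t₀ := by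
  have hexp (t : ℝ) : HasDerivAt (fun t ↦ NormedSpace.exp ((t - t₀) • a) * g t₀)
      (a * (NormedSpace.exp ((t - t₀) • a) * g t₀)) t := by
    simpa only [mul_assoc] using
      ((hasDerivAt_exp_smul_const' a (t - t₀)).comp_sub_const t t₀).mul_const (g t₀)
  have hlip (_ : ℝ) : LipschitzOnWith _ (a * ·) Set.univ :=
    (ContinuousLinearMap.mul ℝ 𝔸 a).lipschitz.lipschitzOnWith
  refine congrFun (ODE_solution_unique_univ (t₀ := t₀) hlip (fun t ↦ ⟨hg t, trivial⟩)
    (fun t ↦ ⟨hexp t, trivial⟩) ?_) t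
  simp only [sub_self, zero_smul, NormedSpace.exp_zero, one_mul]

lemma deriv_add_smul_eq_exp_mul_of_mul_self_eq {σ : 𝔸} {k : ℝ} (hσ : σ * σ = k • 1)
    {f f' : ℝ → ℝ} (hf : ∀ t, HasDerivAt f (f' t) t) (hf' : ∀ t, HasDerivAt f' (k * f t) t)
    (t₀ t : ℝ) :
    f' t • 1 + f t • σ = NormedSpace.exp ((t - t₀) • σ) * (f' t₀ • 1 + f t₀ • σ) := by
  refine eq_exp_smul_mul_of_hasDerivAt (g := fun t ↦ f' t • 1 + f t • σ) (fun t ↦ ?_) t₀ t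
  refine (((hf' t).smul_const 1).add ((hf t).smul_const σ)).congr_deriv ?_
  simp only [mul_add, mul_smul_comm, mul_one, hσ, smul_smul, mul_comm k, add_comm]

end CharacteristicRoot

lemma exists_exp_mul_I_mul_eq_of_norm_eq {z w : ℂ} (h : ‖z‖ = ‖w‖) :
    ∃ θ : ℝ, Complex.exp (θ * Complex.I) * z = w := by
  rcases eq_or_ne z 0 with rfl | hz
  · exact ⟨0, by rw [mul_zero, norm_eq_zero.mp (h.symm.trans norm_zero)]⟩
  · have hwz : ‖w / z‖ = 1 := by rw [norm_div, ← h, div_self (norm_ne_zero_iff.mpr hz)]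
    obtain ⟨θ, hθ⟩ := (Complex.norm_eq_one_iff _).mp hwz
    exact ⟨θ, by rw [hθ, div_mul_cancel₀ _ hz]⟩

lemma surjective_of_hasDerivAt_const {f : ℝ → ℝ} {b : ℝ} (hb : b ≠ 0)
    (hf : ∀ t, HasDerivAt f b t) : Function.Surjective f := by
  have hg (t : ℝ) : HasDerivAt (fun t ↦ f t - t * b) 0 t :=
    ((hf t).sub ((hasDerivAt_id t).mul_const b)).congr_deriv (by rw [one_mul, sub_self])
  intro y
  have hconst := is_const_of_deriv_eq_zero (fun t ↦ (hg t).differentiableAt)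
    (fun t ↦ (hg t).deriv) ((y - f 0) / b) 0
  refine ⟨(y - f 0) / b, ?_⟩
  rw [div_mul_cancel₀ _ hb] at hconst
  linarith

section PhasePlane

variable {f f' : ℝ → ℝ}

lemma sq_sub_mul_sq_eq_of_hasDerivAt {k : ℝ} (hf : ∀ t, HasDerivAt f (f' t) t)
    (hf' : ∀ t, HasDerivAt f' (k * f t) t) (t₀ t : ℝ) :
    f' t ^ 2 - k * f t ^ 2 = f' t₀ ^ 2 - k * f t₀ ^ 2 := by
  have hE (t : ℝ) : HasDerivAt (fun t ↦ f' t ^ 2 - k * f t ^ 2) 0 t :=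
    (((hf' t).pow 2).sub (((hf t).pow 2).const_mul k)).congr_deriv (by push_cast; ring)
  exact is_const_of_deriv_eq_zero (fun t ↦ (hE t).differentiableAt) (fun t ↦ (hE t).deriv) t t₀

lemma exists_phase_eq_of_elliptic {ω : ℝ} (hω : ω ≠ 0) (hf : ∀ t, HasDerivAt f (f' t) t)
    (hf' : ∀ t, HasDerivAt f' (-ω ^ 2 * f t) t) (t₀ : ℝ) {y p : ℝ}
    (hE : p ^ 2 + ω ^ 2 * y ^ 2 = f' t₀ ^ 2 + ω ^ 2 * f t₀ ^ 2) :
    ∃ t, f t = y ∧ f' t = p := by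
  have hσ : ω * Complex.I * (ω * Complex.I) = (-ω ^ 2) • (1 : ℂ) := by
    simp [Complex.ext_iff, sq]
  have hnorm : ‖f' t₀ • 1 + f t₀ • (ω * Complex.I)‖ = ‖p • 1 + y • (ω * Complex.I)‖ := by
    have norm_eq (a b : ℝ) : ‖a • 1 + b • (ω * Complex.I)‖ = √(a ^ 2 + ω ^ 2 * b ^ 2) := by
      rw [← mul_pow, ← Complex.norm_add_mul_I]
      congr 1
      simp only [Complex.real_smul, Complex.ofReal_mul]
      ring
    rw [norm_eq, norm_eq, hE]
  obtain ⟨θ, hθ⟩ := exists_exp_mul_I_mul_eq_of_norm_eq hnorm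
  have hangle : (t₀ + θ / ω - t₀) • (ω * Complex.I) = θ * Complex.I := by
    rw [add_sub_cancel_left, Complex.real_smul, ← mul_assoc, ← Complex.ofReal_mul,
      div_mul_cancel₀ _ hω]
  have hrotate := deriv_add_smul_eq_exp_mul_of_mul_self_eq hσ hf hf' t₀ (t₀ + θ / ω)
  rw [hangle, ← Complex.exp_eq_exp_ℂ, hθ] at hrotate
  exact ⟨t₀ + θ / ω, by simpa [Complex.ext_iff, hω, and_comm] using hrotate⟩

lemma exists_phase_eq_of_hyperbolic {s : ℝ} (hs : s ≠ 0) (hf : ∀ t, HasDerivAt f (f' t) t)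
    (hf' : ∀ t, HasDerivAt f' (s ^ 2 * f t) t) (t₀ : ℝ) {y p : ℝ}
    (hE : p ^ 2 - s ^ 2 * y ^ 2 = f' t₀ ^ 2 - s ^ 2 * f t₀ ^ 2)
    (hbranch : 0 < (p + y * s) * (f' t₀ + f t₀ * s)) :
    ∃ t, f t = y ∧ f' t = p := by
  have hratio : 0 < (p + y * s) / (f' t₀ + f t₀ * s) := div_pos_iff.mpr (mul_pos_iff.mp hbranch)
  obtain ⟨hp, h₀⟩ := mul_ne_zero_iff.mp hbranch.ne'
  obtain ⟨t, ht⟩ : ∃ t, (t - t₀) * s = log ((p + y * s) / (f' t₀ + f t₀ * s)) :=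
    ⟨t₀ + log ((p + y * s) / (f' t₀ + f t₀ * s)) / s, by
      rw [add_sub_cancel_left, div_mul_cancel₀ _ hs]⟩
  have hplus : f' t + f t * s = p + y * s := by
    have hgrowth : f' t + f t * s = exp ((t - t₀) * s) * (f' t₀ + f t₀ * s) := by
      simpa only [smul_eq_mul, mul_one, exp_eq_exp_ℝ] using
        deriv_add_smul_eq_exp_mul_of_mul_self_eq (σ := s) (by simp [sq]) hf hf' t₀ t
    rw [hgrowth, ht, exp_log hratio, div_mul_cancel₀ _ h₀]
  have hminus : f' t - f t * s = p - y * s := by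
    refine mul_left_cancel₀ hp ?_
    calc (p + y * s) * (f' t - f t * s) = f' t ^ 2 - s ^ 2 * f t ^ 2 := by rw [← hplus]; ring
      _ = p ^ 2 - s ^ 2 * y ^ 2 := by rw [sq_sub_mul_sq_eq_of_hasDerivAt hf hf' t₀ t, hE]
      _ = (p + y * s) * (p - y * s) := by ring
  exact ⟨t, mul_right_cancel₀ hs (by linarith), by linarith⟩

end PhasePlane

theorem ode_solution_attains_one_general {k c y t₀ : ℝ} {f f' : ℝ → ℝ}
    (hkc : k ≠ 0 ∨ c ≠ 0) (hf : ∀ t, HasDerivAt f (f' t) t)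
    (hf' : ∀ t, HasDerivAt f' (k * f t) t) (hE : f' t₀ ^ 2 = k * f t₀ ^ 2 + c)
    (hpos : 0 < f t₀) (hy : 0 < y) (hyE : 0 ≤ k * y ^ 2 + c) : ∃ t, f t = y := by
  have hp : √(k * y ^ 2 + c) ^ 2 = k * y ^ 2 + c := sq_sqrt hyE
  have hp₀ := sqrt_nonneg (k * y ^ 2 + c)
  rcases lt_trichotomy k 0 with hk | rfl | hk
  · obtain ⟨ω, hω, rfl⟩ : ∃ ω : ℝ, ω ≠ 0 ∧ k = -ω ^ 2 :=
      ⟨√(-k), (sqrt_pos.mpr (neg_pos.mpr hk)).ne', by rw [sq_sqrt (neg_nonneg.mpr hk.le), neg_neg]⟩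
    obtain ⟨t, ht, -⟩ := exists_phase_eq_of_elliptic hω hf hf' t₀ (y := y)
      (p := √(-ω ^ 2 * y ^ 2 + c)) (by linarith)
    exact ⟨t, ht⟩
  · have hconst (t : ℝ) : f' t = f' t₀ :=
      is_const_of_deriv_eq_zero (fun t ↦ (hf' t).differentiableAt)
        (fun t ↦ by rw [(hf' t).deriv, zero_mul]) t t₀
    have hslope : f' t₀ ≠ 0 := fun h ↦
      hkc.resolve_left (not_not_intro rfl) (by simpa [h] using hE.symm)
    exact surjective_of_hasDerivAt_const hslope (fun t ↦ hconst t ▸ hf t) y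
  · obtain ⟨s, hs, rfl⟩ : ∃ s : ℝ, 0 < s ∧ k = s ^ 2 := ⟨√k, sqrt_pos.mpr hk, (sq_sqrt hk.le).symm⟩
    -- The target is put on the branch of the orbit by giving its velocity the sign of `f' t₀`.
    rcases le_or_gt 0 (f' t₀) with h₀ | h₀
    · obtain ⟨t, ht, -⟩ := exists_phase_eq_of_hyperbolic hs.ne' hf hf' t₀ (y := y)
        (p := √(s ^ 2 * y ^ 2 + c)) (by linarith) (by positivity)
      exact ⟨t, ht⟩
    · have hys : 0 < y * s := mul_pos hy hs
      have hfs : 0 < f t₀ * s := mul_pos hpos hs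
      obtain ⟨t, ht, -⟩ := exists_phase_eq_of_hyperbolic (s := -s) (neg_ne_zero.mpr hs.ne') hf
        (by simpa only [neg_sq] using hf') t₀ (y := y) (p := -√(s ^ 2 * y ^ 2 + c))
        (by linarith) (mul_pos_of_neg_of_neg (by linarith) (by linarith))
      exact ⟨t, ht⟩

/-- Let c² + d² ≠ 0 with d ≥ 0, and let f be a C² solution on ℝ of
(f′)² = (d−c)f² + c, f″ = (d−c)f. If f attains a positive value somewhere, then f
attains the value 1 somewhere. -/
theorem ode_solution_attains_one
    (c d : ℝ) (hcd : c ^ 2 + d ^ 2 ≠ 0) (hd : 0 ≤ d) (f : ℝ → ℝ)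
    (hf : ContDiff ℝ 2 f)
    (hode1 : ∀ u, (deriv f u) ^ 2 = (d - c) * (f u) ^ 2 + c)
    (hode2 : ∀ u, deriv (deriv f) u = (d - c) * f u)
    (hpos : ∃ u₁ : ℝ, 0 < f u₁) :
    ∃ u₀ : ℝ, f u₀ = 1 := by
  obtain ⟨u₁, hu₁⟩ := hpos
  have hkc : d - c ≠ 0 ∨ c ≠ 0 := by
    contrapose! hcd
    obtain ⟨hdc, rfl⟩ := hcd
    rw [sub_eq_zero.mp hdc]
    norm_num
  exact ode_solution_attains_one_general hkc
    (fun u ↦ (hf.differentiable two_ne_zero u).hasDerivAt)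
    (fun u ↦ hode2 u ▸ (hf.differentiable_deriv_two u).hasDerivAt)
    (hode1 u₁) hu₁ one_pos (by simpa using hd)
end

section
/- Let Σ = I×J be a product of open intervals, ρ : Σ → (0,∞) a smooth solution of the PDE system, and X, N : Σ → ℝ³ smooth maps satisfying the Gauss–Weingarten system and the conformal frame relations. Assume in addition that there are twice continuously differentiable f : I → ℝ, g : J → ℝ and constants c, d ∈ ℝ with c² + d² ≠ 0 satisfying the ODE system, such that ρ_u(u,v) = f(u), ρ_v(u,v) = g(v), and ρ(u,v) = (f(u)² + g(v)² − 1)/(f′(u) + g′(v)) on Σ. Define the axial vector fields v₁ := ((ρ_u² − ρ·ρ_uu)/ρ²)·X_u − (ρ_u·ρ_v/ρ²)·X_v + (ρ_u/ρ)·N and v₂ := −(ρ_u·ρ_v/ρ²)·X_u + ((ρ_v² − ρ·ρ_vv)/ρ²)·X_v − (ρ_v/ρ)·N. Then at every point of Σ: ⟨v₁, v₁⟩ = c, ⟨v₂, v₂⟩ = d, and ⟨v₁, v₂⟩ = 0. -/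
open Real Filter

/-!
Write `p, q, a, b` for `ρ_u, ρ_v, ρ_uu, ρ_vv`. The formula for `ρ` is the Gauss equation
`ρ (a + b) = p² + q² - 1` together with `a + b ≠ 0`. The Gauss equation alone makes `v₁` and `v₂`
orthogonal and gives `⟨v₁, v₁⟩ = a² + p² (b - a) / ρ`. Subtracting the first integrals of the two
ODEs yields `(b - a) (b + a) = (c - d) ρ (b + a)`, so `(b - a) / ρ = c - d`, and the first integral
for `f` turns `a² + (c - d) p²` into `c`. Exchanging `u` with `v` and `N` with `-N` exchanges `v₁`
with `v₂`.
-/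

section ConformalFrame

variable {K E : Type*} [AddCommGroup E]

/-- A conformal frame with factor `r` for a bilinear form `B`: tangent vectors `e₁`, `e₂` that are
orthogonal with square `r²`, and a normal `n` to both with square `-1`. Each off-diagonal product is
recorded in one order only, as `B` is meant to be symmetric. -/
structure IsConformalFrame [CommRing K] [Module K E] (B : LinearMap.BilinForm K E)
    (r : K) (e₁ e₂ n : E) : Prop where
  left_left : B e₁ e₁ = r ^ 2
  right_right : B e₂ e₂ = r ^ 2
  left_right : B e₁ e₂ = 0
  left_normal : B e₁ n = 0
  right_normal : B e₂ n = 0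
  normal_normal : B n n = -1

/-- The axial vector `v₁` in the frame `e₁, e₂, n` = `X_u, X_v, N`, where `r, p, q, a` stand for
`ρ, ρ_u, ρ_v, ρ_uu`. -/
def axialU [Field K] [Module K E] (r p q a : K) (e₁ e₂ n : E) : E :=
  ((p ^ 2 - r * a) / r ^ 2) • e₁ - ((p * q) / r ^ 2) • e₂ + (p / r) • n

/-- The axial vector `v₂` in the frame `e₁, e₂, n` = `X_u, X_v, N`, where `r, p, q, b` stand for
`ρ, ρ_u, ρ_v, ρ_vv`. -/
def axialV [Field K] [Module K E] (r p q b : K) (e₁ e₂ n : E) : E :=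
  -(((p * q) / r ^ 2) • e₁) + ((q ^ 2 - r * b) / r ^ 2) • e₂ - (q / r) • n

theorem axialV_eq_axialU_swap [Field K] [Module K E] (r p q b : K) (e₁ e₂ n : E) :
    axialV r p q b e₁ e₂ n = axialU r q p b e₂ e₁ (-n) := by
  simp only [axialU, axialV, mul_comm q p]
  module

namespace IsConformalFrame

section CommRing

variable [CommRing K] [Module K E] {B : LinearMap.BilinForm K E} {r : K} {e₁ e₂ n : E}

theorem swap (h : IsConformalFrame B r e₁ e₂ n) (hB : B.IsSymm) :
    IsConformalFrame B r e₂ e₁ (-n) where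
  left_left := h.right_right
  right_right := h.left_left
  left_right := (hB.eq e₁ e₂).symm.trans h.left_right
  left_normal := by rw [map_neg, h.right_normal, neg_zero]
  right_normal := by rw [map_neg, h.left_normal, neg_zero]
  normal_normal := by rw [map_neg, LinearMap.map_neg₂, neg_neg, h.normal_normal]

theorem apply_linearCombination (h : IsConformalFrame B r e₁ e₂ n) (hB : B.IsSymm)
    (x y z x' y' z' : K) :
    B (x • e₁ + y • e₂ + z • n) (x' • e₁ + y' • e₂ + z' • n) =
      (x * x' + y * y') * r ^ 2 - z * z' := by
  have h₂₁ : B e₂ e₁ = 0 := (hB.eq e₁ e₂).symm.trans h.left_right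
  have hn₁ : B n e₁ = 0 := (hB.eq e₁ n).symm.trans h.left_normal
  have hn₂ : B n e₂ = 0 := (hB.eq e₂ n).symm.trans h.right_normal
  simp only [map_add, map_smul, LinearMap.add_apply, LinearMap.smul_apply, smul_eq_mul,
    h.left_left, h.right_right, h.left_right, h.left_normal, h.right_normal, h.normal_normal,
    h₂₁, hn₁, hn₂]
  ring

end CommRing

section Field

variable [Field K] [Module K E] {B : LinearMap.BilinForm K E} {r p q a b : K} {e₁ e₂ n : E}

theorem apply_axialU_self (h : IsConformalFrame B r e₁ e₂ n) (hB : B.IsSymm) (hr : r ≠ 0)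
    (hGauss : r * (a + b) = p ^ 2 + q ^ 2 - 1) :
    B (axialU r p q a e₁ e₂ n) (axialU r p q a e₁ e₂ n) = a ^ 2 + p ^ 2 * ((b - a) / r) := by
  rw [axialU, sub_eq_add_neg, ← neg_smul, h.apply_linearCombination hB]
  field_simp
  linear_combination -p ^ 2 * hGauss

theorem apply_axialV_self (h : IsConformalFrame B r e₁ e₂ n) (hB : B.IsSymm) (hr : r ≠ 0)
    (hGauss : r * (a + b) = p ^ 2 + q ^ 2 - 1) :
    B (axialV r p q b e₁ e₂ n) (axialV r p q b e₁ e₂ n) = b ^ 2 + q ^ 2 * ((a - b) / r) := by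
  rw [axialV_eq_axialU_swap]
  exact (h.swap hB).apply_axialU_self hB hr (by linear_combination hGauss)

theorem apply_axialU_axialV (h : IsConformalFrame B r e₁ e₂ n) (hB : B.IsSymm) (hr : r ≠ 0)
    (hGauss : r * (a + b) = p ^ 2 + q ^ 2 - 1) :
    B (axialU r p q a e₁ e₂ n) (axialV r p q b e₁ e₂ n) = 0 := by
  rw [axialU, axialV, sub_eq_add_neg (_ • e₁), sub_eq_add_neg (_ + _ • e₂), ← neg_smul, ← neg_smul,
    ← neg_smul, h.apply_linearCombination hB]
  field_simp
  linear_combination p * q * hGauss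

end Field

end IsConformalFrame

end ConformalFrame

theorem sub_div_eq_of_first_integrals {K : Type*} [Field K] {r p q a b c d : K}
    (hr : r ≠ 0) (hab : a + b ≠ 0) (hGauss : r * (a + b) = p ^ 2 + q ^ 2 - 1)
    (hp : a ^ 2 = (d - c) * p ^ 2 + c) (hq : b ^ 2 = (c - d) * q ^ 2 + d) :
    (b - a) / r = c - d := by
  rw [div_eq_iff hr]
  apply mul_right_cancel₀ hab
  linear_combination hq - hp - (c - d) * hGauss

section PartialDerivatives

open Topology

theorem deriv_deriv_eq_of_hasDerivAt {𝕜 E : Type*} [NontriviallyNormedField 𝕜]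
    [NormedAddCommGroup E] [NormedSpace 𝕜 E] {γ φ : 𝕜 → E} {t : 𝕜} {a : E}
    (hγ : ∀ᶠ x in 𝓝 t, HasDerivAt γ (φ x) x) (hφ : HasDerivAt φ a t) :
    deriv (deriv γ) t = a :=
  (hφ.congr_of_eventuallyEq (hγ.mono fun _ hx => hx.deriv)).deriv

variable {E : Type*} [NormedAddCommGroup E] [NormedSpace ℝ E] {F : ℝ → ℝ → E} {u v : ℝ}

theorem hasDerivAt_pu (hF : DifferentiableAt ℝ (fun z : ℝ × ℝ => F z.1 z.2) (u, v)) :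
    HasDerivAt (fun x => F x v) (pu F u v) u :=
  (hF.comp (f := fun x => (x, v)) u (by fun_prop)).hasDerivAt

theorem hasDerivAt_pv (hF : DifferentiableAt ℝ (fun z : ℝ × ℝ => F z.1 z.2) (u, v)) :
    HasDerivAt (F u) (pv F u v) v :=
  (hF.comp (f := fun y => (u, y)) v (by fun_prop)).hasDerivAt

theorem eventually_hasDerivAt_of_pu_eq {I J : Set ℝ} (hI : IsOpen I) (hJ : IsOpen J)
    (hF : DifferentiableOn ℝ (fun z : ℝ × ℝ => F z.1 z.2) (I ×ˢ J)) (hu : u ∈ I) (hv : v ∈ J)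
    {φ : ℝ → E} (hφ : ∀ x ∈ I, pu F x v = φ x) :
    ∀ᶠ x in 𝓝 u, HasDerivAt (fun x => F x v) (φ x) x := by
  filter_upwards [hI.mem_nhds hu] with x hx
  exact hφ x hx ▸ hasDerivAt_pu (hF.differentiableAt ((hI.prod hJ).mem_nhds ⟨hx, hv⟩))

theorem eventually_hasDerivAt_of_pv_eq {I J : Set ℝ} (hI : IsOpen I) (hJ : IsOpen J)
    (hF : DifferentiableOn ℝ (fun z : ℝ × ℝ => F z.1 z.2) (I ×ˢ J)) (hu : u ∈ I) (hv : v ∈ J)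
    {φ : ℝ → E} (hφ : ∀ y ∈ J, pv F u y = φ y) :
    ∀ᶠ y in 𝓝 v, HasDerivAt (F u) (φ y) y := by
  filter_upwards [hJ.mem_nhds hv] with y hy
  exact hφ y hy ▸ hasDerivAt_pv (hF.differentiableAt ((hI.prod hJ).mem_nhds ⟨hu, hy⟩))

end PartialDerivatives

/-- The Minkowski inner product `mink` bundled as a bilinear form on `ℝ^{2,1}`, the ambient form of
the frame `X_u, X_v, N`. -/
def minkForm : LinearMap.BilinForm ℝ (ℝ × ℝ × ℝ) :=
  LinearMap.mk₂ ℝ mink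
    (fun _ _ _ => by simp only [mink, Prod.fst_add, Prod.snd_add]; ring)
    (fun _ _ _ => by simp only [mink, Prod.smul_fst, Prod.smul_snd, smul_eq_mul]; ring)
    (fun _ _ _ => by simp only [mink, Prod.fst_add, Prod.snd_add]; ring)
    (fun _ _ _ => by simp only [mink, Prod.smul_fst, Prod.smul_snd, smul_eq_mul]; ring)

theorem minkForm_isSymm : minkForm.IsSymm :=
  ⟨fun x y => by simp only [minkForm, LinearMap.mk₂_apply, mink]; ring⟩

open Topology in
theorem axial_directions_causal_character_general
    {E : Type*} [AddCommGroup E] [Module ℝ E] {B : LinearMap.BilinForm ℝ E} (hB : B.IsSymm)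
    {ρ : ℝ → ℝ → ℝ} {u v : ℝ} {e₁ e₂ n : E} (hframe : IsConformalFrame B (ρ u v) e₁ e₂ n)
    (hρ : ρ u v ≠ 0) {f g : ℝ → ℝ} {f' g' c d : ℝ}
    (hρu : ∀ᶠ x in 𝓝 u, HasDerivAt (fun x => ρ x v) (f x) x)
    (hρv : ∀ᶠ y in 𝓝 v, HasDerivAt (ρ u) (g y) y)
    (hf : HasDerivAt f f' u) (hg : HasDerivAt g g' v)
    (hode_f : f' ^ 2 = (d - c) * f u ^ 2 + c) (hode_g : g' ^ 2 = (c - d) * g v ^ 2 + d)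
    (hρform : ρ u v = (f u ^ 2 + g v ^ 2 - 1) / (f' + g')) :
    let v₁ := axialU (ρ u v) (pu ρ u v) (pv ρ u v) (pu (pu ρ) u v) e₁ e₂ n
    let v₂ := axialV (ρ u v) (pu ρ u v) (pv ρ u v) (pv (pv ρ) u v) e₁ e₂ n
    B v₁ v₁ = c ∧ B v₂ v₂ = d ∧ B v₁ v₂ = 0 := by
  have hp : pu ρ u v = f u := hρu.self_of_nhds.deriv
  have hq : pv ρ u v = g v := hρv.self_of_nhds.deriv
  have ha : pu (pu ρ) u v = f' := deriv_deriv_eq_of_hasDerivAt hρu hf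
  have hb : pv (pv ρ) u v = g' := deriv_deriv_eq_of_hasDerivAt hρv hg
  have hab : f' + g' ≠ 0 := (div_ne_zero_iff.mp (hρform ▸ hρ)).2
  have hGauss : ρ u v * (f' + g') = f u ^ 2 + g v ^ 2 - 1 := (eq_div_iff hab).mp hρform
  have hdiff : (g' - f') / ρ u v = c - d :=
    sub_div_eq_of_first_integrals hρ hab hGauss hode_f hode_g
  rw [hp, hq, ha, hb]
  refine ⟨?_, ?_, hframe.apply_axialU_axialV hB hρ hGauss⟩
  · rw [hframe.apply_axialU_self hB hρ hGauss, hdiff]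
    linear_combination hode_f
  · rw [hframe.apply_axialV_self hB hρ hGauss, ← neg_sub, neg_div, hdiff]
    linear_combination hode_g

/-- For a maximal surface with planar curvature lines whose metric
function separates as ρ_u = f(u), ρ_v = g(v) with f, g solving the ODE system with
constants c, d (c² + d² ≠ 0), the axial directions satisfy ⟨v₁,v₁⟩ = c, ⟨v₂,v₂⟩ = d,
and ⟨v₁,v₂⟩ = 0 at every point. -/
theorem axial_directions_causal_character
    (I J : Set ℝ) (hIo : IsOpen I) (hJo : IsOpen J)
    (hIc : I.OrdConnected) (hJc : J.OrdConnected)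
    (ρ : ℝ → ℝ → ℝ) (X N : ℝ → ℝ → ℝ × ℝ × ℝ)
    (hρ : ContDiffOn ℝ (⊤ : ℕ∞) (fun p : ℝ × ℝ => ρ p.1 p.2) (I ×ˢ J))
    (hρpos : ∀ u ∈ I, ∀ v ∈ J, 0 < ρ u v)
    (hGauss : ∀ u ∈ I, ∀ v ∈ J,
      ρ u v * (pu (pu ρ) u v + pv (pv ρ) u v)
        - ((pu ρ u v) ^ 2 + (pv ρ u v) ^ 2) + 1 = 0)
    (hPlanar : ∀ u ∈ I, ∀ v ∈ J, pv (pu ρ) u v = 0)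
    (f g : ℝ → ℝ) (c d : ℝ) (hcd : c ^ 2 + d ^ 2 ≠ 0)
    (hfC : ContDiffOn ℝ 2 f I) (hgC : ContDiffOn ℝ 2 g J)
    (hsep : ∀ u ∈ I, ∀ v ∈ J, pu ρ u v = f u ∧ pv ρ u v = g v)
    (hode_f : ∀ u ∈ I, (deriv f u) ^ 2 = (d - c) * (f u) ^ 2 + c ∧
      deriv (deriv f) u = (d - c) * f u)
    (hode_g : ∀ v ∈ J, (deriv g v) ^ 2 = (c - d) * (g v) ^ 2 + d ∧
      deriv (deriv g) v = (c - d) * g v)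
    (hρform : ∀ u ∈ I, ∀ v ∈ J,
      ρ u v = ((f u) ^ 2 + (g v) ^ 2 - 1) / (deriv f u + deriv g v))
    (hGW1 : ∀ u ∈ I, ∀ v ∈ J, pu (pu X) u v =
      (pu ρ u v / ρ u v) • pu X u v - (pv ρ u v / ρ u v) • pv X u v + N u v)
    (hGW2 : ∀ u ∈ I, ∀ v ∈ J, pv (pv X) u v =
      -((pu ρ u v / ρ u v) • pu X u v) + (pv ρ u v / ρ u v) • pv X u v - N u v)
    (hGW3 : ∀ u ∈ I, ∀ v ∈ J, pv (pu X) u v =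
      (pv ρ u v / ρ u v) • pu X u v + (pu ρ u v / ρ u v) • pv X u v)
    (hGW4 : ∀ u ∈ I, ∀ v ∈ J, pu N u v = ((ρ u v) ^ 2)⁻¹ • pu X u v)
    (hGW5 : ∀ u ∈ I, ∀ v ∈ J, pv N u v = -(((ρ u v) ^ 2)⁻¹ • pv X u v))
    (hfr1 : ∀ u ∈ I, ∀ v ∈ J, mink (pu X u v) (pu X u v) = (ρ u v) ^ 2)
    (hfr2 : ∀ u ∈ I, ∀ v ∈ J, mink (pv X u v) (pv X u v) = (ρ u v) ^ 2)
    (hfr3 : ∀ u ∈ I, ∀ v ∈ J, mink (pu X u v) (pv X u v) = 0)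
    (hfr4 : ∀ u ∈ I, ∀ v ∈ J, mink (pu X u v) (N u v) = 0)
    (hfr5 : ∀ u ∈ I, ∀ v ∈ J, mink (pv X u v) (N u v) = 0)
    (hfr6 : ∀ u ∈ I, ∀ v ∈ J, mink (N u v) (N u v) = -1)
    (V1 V2 : ℝ → ℝ → ℝ × ℝ × ℝ)
    (hV1 : ∀ u ∈ I, ∀ v ∈ J, V1 u v =
      ((((pu ρ u v) ^ 2 - ρ u v * pu (pu ρ) u v) / (ρ u v) ^ 2) • pu X u v
        - ((pu ρ u v * pv ρ u v) / (ρ u v) ^ 2) • pv X u v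
        + (pu ρ u v / ρ u v) • N u v))
    (hV2 : ∀ u ∈ I, ∀ v ∈ J, V2 u v =
      (-(((pu ρ u v * pv ρ u v) / (ρ u v) ^ 2) • pu X u v)
        + (((pv ρ u v) ^ 2 - ρ u v * pv (pv ρ) u v) / (ρ u v) ^ 2) • pv X u v
        - (pv ρ u v / ρ u v) • N u v)) :
    ∀ u ∈ I, ∀ v ∈ J,
      mink (V1 u v) (V1 u v) = c ∧
      mink (V2 u v) (V2 u v) = d ∧
      mink (V1 u v) (V2 u v) = 0 := by
  intro u hu v hv
  have hρd := hρ.differentiableOn (by simp)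
  rw [hV1 u hu v hv, hV2 u hu v hv]
  exact axial_directions_causal_character_general minkForm_isSymm
    ⟨hfr1 u hu v hv, hfr2 u hu v hv, hfr3 u hu v hv, hfr4 u hu v hv, hfr5 u hu v hv, hfr6 u hu v hv⟩
    (hρpos u hu v hv).ne'
    (eventually_hasDerivAt_of_pu_eq hIo hJo hρd hu hv fun x hx => (hsep x hx v hv).1)
    (eventually_hasDerivAt_of_pv_eq hIo hJo hρd hu hv fun y hy => (hsep u hu y hy).2)
    ((hfC.differentiableOn two_ne_zero).hasDerivAt (hIo.mem_nhds hu))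
    ((hgC.differentiableOn two_ne_zero).hasDerivAt (hJo.mem_nhds hv))
    (hode_f u hu).1 (hode_g v hv).1 (hρform u hu v hv)
end

section
/- Let Σ = I×J, ρ : Σ → (0,∞), X, N : Σ → ℝ³, f, g, and constants c, d be as follows: ρ is a smooth solution of the PDE system; X, N satisfy the Gauss–Weingarten system and the conformal frame relations; ρ_u(u,v) = f(u), ρ_v(u,v) = g(v) with f, g satisfying the ODE system with constants c > 0 and d > 0; and ρ = (f² + g² − 1)/(f′ + g′). Suppose the constant axial vectors satisfy v₁ = √c·(1,0,0) and v₂ = −√d·(0,1,0), where v₁ := ((ρ_u² − ρ·ρ_uu)/ρ²)·X_u − (ρ_u·ρ_v/ρ²)·X_v + (ρ_u/ρ)·N and v₂ := −(ρ_u·ρ_v/ρ²)·X_u + ((ρ_v² − ρ·ρ_vv)/ρ²)·X_v − (ρ_v/ρ)·N. Writing N = (N₁, N₂, N₀), one has at every point of Σ: N₁ = −(1/√c)·(ρ_u/ρ), N₂ = −(1/√d)·(ρ_v/ρ), and N₀² = (1/c)·(ρ_u/ρ)² + (1/d)·(ρ_v/ρ)² + 1; in particular, if N₀ > 0 everywhere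 then N₀ = √((1/c)(ρ_u/ρ)² + (1/d)(ρ_v/ρ)² + 1). -/
open Real Filter

/-! The coefficient of the timelike unit normal `N` in `v₁` is `ρ_u/ρ` and in `v₂` it is `-ρ_v/ρ`;
the rest of `v₁` and `v₂` is tangential. Pairing with `N` therefore gives `⟨v₁, N⟩ = -ρ_u/ρ` and
`⟨v₂, N⟩ = ρ_v/ρ`. As `v₁` and `v₂` lie along coordinate axes, these are two components of `N` up
to scaling, and `⟨N, N⟩ = -1` determines the third up to sign. -/

section Minkowski

variable (x y z : ℝ × ℝ × ℝ)

lemma mink_add_left : mink (x + y) z = mink x z + mink y z := by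
  simp only [mink, Prod.fst_add, Prod.snd_add]
  ring

lemma mink_smul_left (a : ℝ) : mink (a • x) z = a * mink x z := by
  simp only [mink, Prod.smul_fst, Prod.smul_snd, smul_eq_mul]
  ring

lemma mink_neg_left : mink (-x) z = -mink x z := by
  rw [← neg_one_smul ℝ x, mink_smul_left, neg_one_mul]

lemma mink_sub_left : mink (x - y) z = mink x z - mink y z := by
  rw [sub_eq_add_neg, mink_add_left, mink_neg_left, sub_eq_add_neg]

lemma mink_fst_axis_left : mink (1, 0, 0) z = z.1 := by simp [mink]

lemma mink_snd_axis_left : mink (0, 1, 0) z = z.2.1 := by simp [mink]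

end Minkowski

section UnitNormal

variable {t n : ℝ × ℝ × ℝ}

lemma mink_add_smul_unitNormal (ht : mink t n = 0) (hn : mink n n = -1) (p : ℝ) :
    mink (t + p • n) n = -p := by
  rw [mink_add_left, mink_smul_left, ht, hn, zero_add, mul_neg_one]

lemma mink_direction_unitNormal {e : ℝ × ℝ × ℝ} {p s : ℝ} (hs : s ≠ 0) (ht : mink t n = 0)
    (hn : mink n n = -1) (hv : t + p • n = s • e) : mink e n = -(1 / s) * p := by
  have pairing : s * mink e n = -p := by
    rw [← mink_smul_left, ← hv, mink_add_smul_unitNormal ht hn]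
  rw [eq_div_of_mul_eq hs ((mul_comm _ _).trans pairing)]
  ring

lemma unitNormal_snd_snd_sq (hn : mink n n = -1) :
    n.2.2 ^ 2 = n.1 ^ 2 + n.2.1 ^ 2 + 1 := by
  rw [mink] at hn
  linarith

end UnitNormal

lemma neg_one_div_sqrt_mul_sq {c : ℝ} (hc : 0 ≤ c) (p : ℝ) :
    (-(1 / √c) * p) ^ 2 = 1 / c * p ^ 2 := by
  rw [mul_pow, neg_sq, div_pow, one_pow, Real.sq_sqrt hc]

theorem normal_vector_formula_general {x y n : ℝ × ℝ × ℝ} {a₁ b₁ a₂ b₂ p q c d : ℝ}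
    (hc : 0 < c) (hd : 0 < d)
    (hx : mink x n = 0) (hy : mink y n = 0) (hn : mink n n = -1)
    (hv₁ : a₁ • x - b₁ • y + p • n = (√c, 0, 0))
    (hv₂ : -(a₂ • x) + b₂ • y - q • n = (0, -√d, 0)) :
    (n.1 = -(1 / √c) * p ∧ n.2.1 = -(1 / √d) * q ∧
      n.2.2 ^ 2 = (1 / c) * p ^ 2 + (1 / d) * q ^ 2 + 1) ∧
    (0 < n.2.2 → n.2.2 = √((1 / c) * p ^ 2 + (1 / d) * q ^ 2 + 1)) := by
  have tangent₁ : mink (a₁ • x - b₁ • y) n = 0 := by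
    simp only [mink_sub_left, mink_smul_left, hx, hy, mul_zero, sub_zero]
  have tangent₂ : mink (-(a₂ • x) + b₂ • y) n = 0 := by
    simp only [mink_add_left, mink_neg_left, mink_smul_left, hx, hy, mul_zero, neg_zero, add_zero]
  have axial₁ : a₁ • x - b₁ • y + p • n = √c • (1, 0, 0) := by simp [hv₁]
  have axial₂ : -(a₂ • x) + b₂ • y + (-q) • n = (-√d) • (0, 1, 0) := by
    rw [neg_smul q n, ← sub_eq_add_neg]
    simp [hv₂]
  have first : n.1 = -(1 / √c) * p := by
    rw [← mink_fst_axis_left n,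
      mink_direction_unitNormal (Real.sqrt_ne_zero'.mpr hc) tangent₁ hn axial₁]
  have second : n.2.1 = -(1 / √d) * q := by
    rw [← mink_snd_axis_left n, mink_direction_unitNormal
      (neg_ne_zero.mpr (Real.sqrt_ne_zero'.mpr hd)) tangent₂ hn axial₂]
    ring
  have third_sq : n.2.2 ^ 2 = (1 / c) * p ^ 2 + (1 / d) * q ^ 2 + 1 := by
    rw [unitNormal_snd_snd_sq hn, first, second, neg_one_div_sqrt_mul_sq hc.le,
      neg_one_div_sqrt_mul_sq hd.le]
  exact ⟨⟨first, second, third_sq⟩, fun hpos => by rw [← third_sq, Real.sqrt_sq hpos.le]⟩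

/-- (Lemma on the unit normal, case c, d > 0.) If the constant axial
vectors are v₁ = √c·(1,0,0) and v₂ = −√d·(0,1,0), then the components of the unit
normal N = (N₁, N₂, N₀) satisfy N₁ = −(1/√c)ρ_u/ρ, N₂ = −(1/√d)ρ_v/ρ, and
N₀² = (1/c)(ρ_u/ρ)² + (1/d)(ρ_v/ρ)² + 1; if moreover N₀ > 0 everywhere then
N₀ = √((1/c)(ρ_u/ρ)² + (1/d)(ρ_v/ρ)² + 1). -/
theorem normal_vector_formula
    (I J : Set ℝ) (hIo : IsOpen I) (hJo : IsOpen J)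
    (hIc : I.OrdConnected) (hJc : J.OrdConnected)
    (ρ : ℝ → ℝ → ℝ) (X N : ℝ → ℝ → ℝ × ℝ × ℝ)
    (hρ : ContDiffOn ℝ (⊤ : ℕ∞) (fun p : ℝ × ℝ => ρ p.1 p.2) (I ×ˢ J))
    (hρpos : ∀ u ∈ I, ∀ v ∈ J, 0 < ρ u v)
    (hGauss : ∀ u ∈ I, ∀ v ∈ J,
      ρ u v * (pu (pu ρ) u v + pv (pv ρ) u v)
        - ((pu ρ u v) ^ 2 + (pv ρ u v) ^ 2) + 1 = 0)
    (hPlanar : ∀ u ∈ I, ∀ v ∈ J, pv (pu ρ) u v = 0)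
    (f g : ℝ → ℝ) (c d : ℝ) (hc : 0 < c) (hd : 0 < d)
    (hfC : ContDiffOn ℝ 2 f I) (hgC : ContDiffOn ℝ 2 g J)
    (hsep : ∀ u ∈ I, ∀ v ∈ J, pu ρ u v = f u ∧ pv ρ u v = g v)
    (hode_f : ∀ u ∈ I, (deriv f u) ^ 2 = (d - c) * (f u) ^ 2 + c ∧
      deriv (deriv f) u = (d - c) * f u)
    (hode_g : ∀ v ∈ J, (deriv g v) ^ 2 = (c - d) * (g v) ^ 2 + d ∧
      deriv (deriv g) v = (c - d) * g v)
    (hρform : ∀ u ∈ I, ∀ v ∈ J,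
      ρ u v = ((f u) ^ 2 + (g v) ^ 2 - 1) / (deriv f u + deriv g v))
    (hGW1 : ∀ u ∈ I, ∀ v ∈ J, pu (pu X) u v =
      (pu ρ u v / ρ u v) • pu X u v - (pv ρ u v / ρ u v) • pv X u v + N u v)
    (hGW2 : ∀ u ∈ I, ∀ v ∈ J, pv (pv X) u v =
      -((pu ρ u v / ρ u v) • pu X u v) + (pv ρ u v / ρ u v) • pv X u v - N u v)
    (hGW3 : ∀ u ∈ I, ∀ v ∈ J, pv (pu X) u v =
      (pv ρ u v / ρ u v) • pu X u v + (pu ρ u v / ρ u v) • pv X u v)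
    (hGW4 : ∀ u ∈ I, ∀ v ∈ J, pu N u v = ((ρ u v) ^ 2)⁻¹ • pu X u v)
    (hGW5 : ∀ u ∈ I, ∀ v ∈ J, pv N u v = -(((ρ u v) ^ 2)⁻¹ • pv X u v))
    (hfr1 : ∀ u ∈ I, ∀ v ∈ J, mink (pu X u v) (pu X u v) = (ρ u v) ^ 2)
    (hfr2 : ∀ u ∈ I, ∀ v ∈ J, mink (pv X u v) (pv X u v) = (ρ u v) ^ 2)
    (hfr3 : ∀ u ∈ I, ∀ v ∈ J, mink (pu X u v) (pv X u v) = 0)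
    (hfr4 : ∀ u ∈ I, ∀ v ∈ J, mink (pu X u v) (N u v) = 0)
    (hfr5 : ∀ u ∈ I, ∀ v ∈ J, mink (pv X u v) (N u v) = 0)
    (hfr6 : ∀ u ∈ I, ∀ v ∈ J, mink (N u v) (N u v) = -1)
    (hV1 : ∀ u ∈ I, ∀ v ∈ J,
      ((((pu ρ u v) ^ 2 - ρ u v * pu (pu ρ) u v) / (ρ u v) ^ 2) • pu X u v
        - ((pu ρ u v * pv ρ u v) / (ρ u v) ^ 2) • pv X u v
        + (pu ρ u v / ρ u v) • N u v)
        = (Real.sqrt c, 0, 0))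
    (hV2 : ∀ u ∈ I, ∀ v ∈ J,
      (-(((pu ρ u v * pv ρ u v) / (ρ u v) ^ 2) • pu X u v)
        + (((pv ρ u v) ^ 2 - ρ u v * pv (pv ρ) u v) / (ρ u v) ^ 2) • pv X u v
        - (pv ρ u v / ρ u v) • N u v)
        = (0, -Real.sqrt d, 0)) :
    (∀ u ∈ I, ∀ v ∈ J,
      (N u v).1 = -(1 / Real.sqrt c) * (pu ρ u v / ρ u v) ∧
      (N u v).2.1 = -(1 / Real.sqrt d) * (pv ρ u v / ρ u v) ∧
      (N u v).2.2 ^ 2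
        = (1 / c) * (pu ρ u v / ρ u v) ^ 2 + (1 / d) * (pv ρ u v / ρ u v) ^ 2 + 1) ∧
    ((∀ u ∈ I, ∀ v ∈ J, 0 < (N u v).2.2) →
      ∀ u ∈ I, ∀ v ∈ J, (N u v).2.2
        = Real.sqrt ((1 / c) * (pu ρ u v / ρ u v) ^ 2
            + (1 / d) * (pv ρ u v / ρ u v) ^ 2 + 1)) := by
  have pointwise u (hu : u ∈ I) v (hv : v ∈ J) := normal_vector_formula_general hc hd
    (hfr4 u hu v hv) (hfr5 u hu v hv) (hfr6 u hu v hv) (hV1 u hu v hv) (hV2 u hu v hv)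
  exact ⟨fun u hu v hv => (pointwise u hu v hv).1,
    fun hpos u hu v hv => (pointwise u hu v hv).2 (hpos u hu v hv)⟩
end

section
/- Fix a, b ∈ ℝ with a² + b² = 1 and define X̃ : ℝ² → ℝ³ by X̃(u,v) = (a/2)·(u − uv² + u³/3, 2uv, −u − uv² + u³/3) − (b/2)·(v + u²v − v³/3, −u² + v², −v + u²v − v³/3). Then each component of X̃ is harmonic (X̃_uu + X̃_vv = 0 on ℝ²), and X̃ is conformal with respect to the Minkowski inner product with conformal factor u²: ⟨X̃_u, X̃_u⟩ = ⟨X̃_v, X̃_v⟩ = u² and ⟨X̃_u, X̃_v⟩ = 0 at every (u,v) ∈ ℝ². (These maps are the associated family of the maximal catenoid with lightlike axis, with λ^{−2} = a + bi.) -/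
open Real Filter

/-! The family is `Re (λ⁻² Φ)` for a holomorphic isotropic curve `Φ` in `ℂ³`. Its partial
derivatives are the real parts of `w = λ⁻² Φ'` and of `i w`, and applying `∂ᵤ² + ∂ᵥ²` to it inserts
the factor `1 + i² = 0`. Writing `Q` for the complexified Minkowski form and `H` for its Hermitian
counterpart, `2 ⟨Re w, Re w⟩ = H w + Re (Q w)` and `2 ⟨Re w, Re (i w)⟩ = -Im (Q w)`; since `Q`
vanishes on `Φ'`, the map is conformal with factor `H w / 2 = |λ⁻²|² u²`. -/

section PlaneMap

open Complex

variable {E F : Type*} [NormedAddCommGroup E] [NormedSpace ℂ E]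
  [NormedAddCommGroup F] [NormedSpace ℝ F]

/-- The map `(u, v) ↦ L (Φ (u + iv))` on the plane obtained from a curve `Φ` in a complex space
through a real-linear map `L`; the surfaces of the Weierstrass representation have `L = Re`. -/
noncomputable def planeMap (L : E →L[ℝ] F) (Φ : ℂ → E) (u v : ℝ) : F := L (Φ (u + v * I))

variable (L : E →L[ℝ] F) {Φ : ℂ → E} {u v : ℝ}

theorem pu_planeMap (hΦ : DifferentiableAt ℂ Φ (u + v * I)) :
    pu (planeMap L Φ) u v = planeMap L (deriv Φ) u v := by
  have hline : HasDerivAt (fun x : ℝ => (x : ℂ) + v * I) 1 u :=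
    (hasDerivAt_id u).ofReal_comp.add_const _
  have hcurve := hΦ.hasDerivAt.scomp u hline
  rw [one_smul] at hcurve
  exact (L.hasFDerivAt.comp_hasDerivAt u hcurve).deriv

theorem pv_planeMap (hΦ : DifferentiableAt ℂ Φ (u + v * I)) :
    pv (planeMap L Φ) u v = planeMap L (I • deriv Φ) u v := by
  have hline : HasDerivAt (fun y : ℝ => (u : ℂ) + y * I) I v := by
    simpa using ((hasDerivAt_id v).ofReal_comp.mul_const I).const_add (u : ℂ)
  exact (L.hasFDerivAt.comp_hasDerivAt v (hΦ.hasDerivAt.scomp v hline)).deriv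

theorem pu_pu_add_pv_pv_planeMap [CompleteSpace E] (hΦ : Differentiable ℂ Φ) (u v : ℝ) :
    pu (pu (planeMap L Φ)) u v + pv (pv (planeMap L Φ)) u v = 0 := by
  have hpu : pu (planeMap L Φ) = planeMap L (deriv Φ) :=
    funext₂ fun _ _ => pu_planeMap L (hΦ _)
  have hpv : pv (planeMap L Φ) = planeMap L (I • deriv Φ) :=
    funext₂ fun _ _ => pv_planeMap L (hΦ _)
  have hΦ' : Differentiable ℂ (deriv Φ) := hΦ.deriv
  have hderiv : I • deriv (I • deriv Φ) = -deriv (deriv Φ) := by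
    ext z
    rw [Pi.smul_apply, deriv_const_smul I (hΦ' z), smul_smul, I_mul_I, neg_one_smul, Pi.neg_apply]
  rw [hpu, hpv, pu_planeMap L (hΦ' _), pv_planeMap L ((hΦ' _).const_smul I), hderiv]
  simp [planeMap]

end PlaneMap

section IsotropicCurve

open Complex

/-- The componentwise real part `ℂ³ → ℝ^{2,1}`. -/
noncomputable def reVec : ℂ × ℂ × ℂ →L[ℝ] ℝ × ℝ × ℝ :=
  reCLM.prodMap (reCLM.prodMap reCLM)

/-- The complex quadratic form on `ℂ³` extending `x ↦ mink x x`; its zeros are the isotropic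
vectors. -/
def minkQuadratic (w : ℂ × ℂ × ℂ) : ℂ := w.1 ^ 2 + w.2.1 ^ 2 - w.2.2 ^ 2

/-- The diagonal `w ↦ ⟨w, conj w⟩` of the Hermitian form on `ℂ³` extending `mink`. -/
def minkHermitian (w : ℂ × ℂ × ℂ) : ℝ := normSq w.1 + normSq w.2.1 - normSq w.2.2

theorem minkQuadratic_smul (c : ℂ) (w : ℂ × ℂ × ℂ) :
    minkQuadratic (c • w) = c ^ 2 * minkQuadratic w := by
  simp only [minkQuadratic, Prod.smul_fst, Prod.smul_snd, smul_eq_mul]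
  ring

theorem minkHermitian_smul (c : ℂ) (w : ℂ × ℂ × ℂ) :
    minkHermitian (c • w) = normSq c * minkHermitian w := by
  simp only [minkHermitian, Prod.smul_fst, Prod.smul_snd, smul_eq_mul, normSq_mul]
  ring

theorem mink_reVec_self (w : ℂ × ℂ × ℂ) :
    mink (reVec w) (reVec w) = (minkHermitian w + (minkQuadratic w).re) / 2 := by
  simp only [mink, reVec, ContinuousLinearMap.coe_prodMap', Prod.map_fst, Prod.map_snd, reCLM_apply,
    minkHermitian, minkQuadratic, normSq_apply, pow_two, sub_re, add_re, mul_re]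
  ring

theorem mink_reVec_I_smul_self (w : ℂ × ℂ × ℂ) :
    mink (reVec (I • w)) (reVec (I • w)) = (minkHermitian w - (minkQuadratic w).re) / 2 := by
  rw [mink_reVec_self, minkHermitian_smul, minkQuadratic_smul, normSq_I, I_sq, one_mul,
    neg_one_mul, neg_re, sub_eq_add_neg]

theorem mink_reVec_reVec_I_smul (w : ℂ × ℂ × ℂ) :
    mink (reVec w) (reVec (I • w)) = -(minkQuadratic w).im / 2 := by
  simp only [mink, reVec, ContinuousLinearMap.coe_prodMap', Prod.map_fst, Prod.map_snd, reCLM_apply,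
    Prod.smul_fst, Prod.smul_snd, smul_eq_mul, I_mul_re, minkQuadratic, pow_two, sub_im, add_im,
    mul_im]
  ring

theorem mink_partials_planeMap_of_isotropic {Φ : ℂ → ℂ × ℂ × ℂ} {u v : ℝ}
    (hΦ : DifferentiableAt ℂ Φ (u + v * I)) (hnull : minkQuadratic (deriv Φ (u + v * I)) = 0) :
    let X := planeMap reVec Φ
    mink (pu X u v) (pu X u v) = minkHermitian (deriv Φ (u + v * I)) / 2 ∧
      mink (pv X u v) (pv X u v) = minkHermitian (deriv Φ (u + v * I)) / 2 ∧
      mink (pu X u v) (pv X u v) = 0 := by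
  intro X
  have hpu : pu X u v = reVec (deriv Φ (u + v * I)) := pu_planeMap reVec hΦ
  have hpv : pv X u v = reVec (I • deriv Φ (u + v * I)) := pv_planeMap reVec hΦ
  rw [hpu, hpv, mink_reVec_self, mink_reVec_I_smul_self, mink_reVec_reVec_I_smul, hnull]
  simp

end IsotropicCurve

section LightlikeCatenoid

open Complex

/-- The isotropic curve whose real part is the maximal catenoid with lightlike axis. -/
noncomputable def catenoidCurve (z : ℂ) : ℂ × ℂ × ℂ :=
  (z / 2 + z ^ 3 / 6, -I * z ^ 2 / 2, -(z / 2) + z ^ 3 / 6)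

theorem hasDerivAt_catenoidCurve (z : ℂ) :
    HasDerivAt catenoidCurve ((1 + z ^ 2) / 2, -I * z, (-1 + z ^ 2) / 2) z := by
  have hlinear : HasDerivAt (fun z : ℂ => z / 2) (1 / 2) z := (hasDerivAt_id z).div_const 2
  have hsquare : HasDerivAt (fun z : ℂ => -I * z ^ 2 / 2) (-I * z) z :=
    (((hasDerivAt_pow 2 z).const_mul (-I)).div_const 2).congr_deriv (by push_cast; ring)
  have hcube : HasDerivAt (fun z : ℂ => z ^ 3 / 6) (z ^ 2 / 2) z :=
    ((hasDerivAt_pow 3 z).div_const 6).congr_deriv (by push_cast; ring)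
  refine ((hlinear.add hcube).prodMk (hsquare.prodMk (hlinear.neg.add hcube))).congr_deriv ?_
  rw [add_div, add_div, neg_div]

theorem differentiable_catenoidCurve : Differentiable ℂ catenoidCurve :=
  fun z => (hasDerivAt_catenoidCurve z).differentiableAt

theorem minkQuadratic_deriv_catenoidCurve (z : ℂ) :
    minkQuadratic (deriv catenoidCurve z) = 0 := by
  rw [(hasDerivAt_catenoidCurve z).deriv, minkQuadratic]
  linear_combination z ^ 2 * I_sq

theorem minkHermitian_deriv_catenoidCurve (z : ℂ) :
    minkHermitian (deriv catenoidCurve z) = 2 * z.re ^ 2 := by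
  rw [(hasDerivAt_catenoidCurve z).deriv]
  simp only [minkHermitian, map_div₀, normSq_ofNat, normSq_apply, pow_two, add_re, add_im, neg_re,
    neg_im, one_re, one_im, mul_re, mul_im, I_re, I_im]
  ring

theorem planeMap_reVec_smul_catenoidCurve (a b u v : ℝ) :
    planeMap reVec ((a + b * I : ℂ) • catenoidCurve) u v =
      ((a / 2) * (u - u * v ^ 2 + u ^ 3 / 3) - (b / 2) * (v + u ^ 2 * v - v ^ 3 / 3),
       (a / 2) * (2 * u * v) - (b / 2) * (-u ^ 2 + v ^ 2),
       (a / 2) * (-u - u * v ^ 2 + u ^ 3 / 3) - (b / 2) * (-v + u ^ 2 * v - v ^ 3 / 3)) := by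
  ext <;> simp [planeMap, reVec, catenoidCurve, pow_succ] <;> ring

theorem mink_partials_planeMap_smul_catenoidCurve (c : ℂ) (u v : ℝ) :
    let X := planeMap reVec (c • catenoidCurve)
    mink (pu X u v) (pu X u v) = normSq c * u ^ 2 ∧
      mink (pv X u v) (pv X u v) = normSq c * u ^ 2 ∧
      mink (pu X u v) (pv X u v) = 0 := by
  have hderiv (z : ℂ) : deriv (c • catenoidCurve) z = c • deriv catenoidCurve z :=
    deriv_const_smul c (differentiable_catenoidCurve z)
  have hnull (z : ℂ) : minkQuadratic (deriv (c • catenoidCurve) z) = 0 := by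
    rw [hderiv, minkQuadratic_smul, minkQuadratic_deriv_catenoidCurve, mul_zero]
  have hfactor :
      minkHermitian (deriv (c • catenoidCurve) (u + v * I)) / 2 = normSq c * u ^ 2 := by
    have hre : (u + v * I : ℂ).re = u := by simp
    rw [hderiv, minkHermitian_smul, minkHermitian_deriv_catenoidCurve, hre]
    ring
  rw [← hfactor]
  exact mink_partials_planeMap_of_isotropic ((differentiable_catenoidCurve _).const_smul c)
    (hnull _)

end LightlikeCatenoid

theorem associated_family_lightlike_catenoid_harmonic_conformal_general
    (a b : ℝ) (Xt : ℝ → ℝ → ℝ × ℝ × ℝ)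
    (hXt : ∀ u v : ℝ, Xt u v =
      ((a / 2) * (u - u * v ^ 2 + u ^ 3 / 3) - (b / 2) * (v + u ^ 2 * v - v ^ 3 / 3),
       (a / 2) * (2 * u * v) - (b / 2) * (-u ^ 2 + v ^ 2),
       (a / 2) * (-u - u * v ^ 2 + u ^ 3 / 3) - (b / 2) * (-v + u ^ 2 * v - v ^ 3 / 3))) :
    (∀ u v : ℝ, pu (pu Xt) u v + pv (pv Xt) u v = 0) ∧
    (∀ u v : ℝ,
      mink (pu Xt u v) (pu Xt u v) = (a ^ 2 + b ^ 2) * u ^ 2 ∧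
      mink (pv Xt u v) (pv Xt u v) = (a ^ 2 + b ^ 2) * u ^ 2 ∧
      mink (pu Xt u v) (pv Xt u v) = 0) := by
  have hplane : Xt = planeMap reVec ((a + b * Complex.I : ℂ) • catenoidCurve) :=
    funext₂ fun u v => (hXt u v).trans (planeMap_reVec_smul_catenoidCurve a b u v).symm
  rw [hplane, ← Complex.normSq_add_mul_I]
  exact ⟨pu_pu_add_pv_pv_planeMap reVec (differentiable_catenoidCurve.const_smul _),
    mink_partials_planeMap_smul_catenoidCurve _⟩

/-- The associated family of the maximal catenoid with lightlike axis
(with λ⁻² = a + bi, a² + b² = 1) is harmonic and conformal with respect to the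
Minkowski inner product, with conformal factor u². -/
theorem associated_family_lightlike_catenoid_harmonic_conformal
    (a b : ℝ) (hab : a ^ 2 + b ^ 2 = 1)
    (Xt : ℝ → ℝ → ℝ × ℝ × ℝ)
    (hXt : ∀ u v : ℝ, Xt u v =
      ((a / 2) * (u - u * v ^ 2 + u ^ 3 / 3) - (b / 2) * (v + u ^ 2 * v - v ^ 3 / 3),
       (a / 2) * (2 * u * v) - (b / 2) * (-u ^ 2 + v ^ 2),
       (a / 2) * (-u - u * v ^ 2 + u ^ 3 / 3) - (b / 2) * (-v + u ^ 2 * v - v ^ 3 / 3))) :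
    (∀ u v : ℝ, pu (pu Xt) u v + pv (pv Xt) u v = 0) ∧
    (∀ u v : ℝ,
      mink (pu Xt u v) (pu Xt u v) = u ^ 2 ∧
      mink (pv Xt u v) (pv Xt u v) = u ^ 2 ∧
      mink (pu Xt u v) (pv Xt u v) = 0) := by
  simpa only [hab, one_mul] using
    associated_family_lightlike_catenoid_harmonic_conformal_general a b Xt hXt
end
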